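/- arXiv:1006.4318 — 2 statements merged into one kernel-verified Lean document; each statement's English description precedes it below -/
import Mathlib

section
/- For any ε > 0 there exists δ > 0 with the following property. Let 𝒢 ⊂ S²×S² be a measurable set with (σ×σ)((S²×S²)∖𝒢) < δ. Let φ : S² → ℝ and ψ : B(0,2) → ℝ be measurable functions satisfying |e^{i[φ(x)+φ(x')]} − e^{iψ(x+x')}| < δ for all (x,x') ∈ 𝒢. Then there exist a measurable set ℰ ⊂ B(0,2)×B(0,2) with Lebesgue measure |ℰ| < ε and a measurable function h : B(0,4) → ℂ such that |e^{i[ψ(z)+ψ(z')]} − h(z+z')| < ε for all (z,z') ∈ (B(0,2)×B(0,2))∖ℰ. -/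
open MeasureTheory Metric Filter
open scoped ENNReal RealInnerProductSpace

noncomputable section

/-- `ℝ³`, i.e. three-dimensional Euclidean space. -/
abbrev E3 : Type := EuclideanSpace ℝ (Fin 3)

/-- The unit sphere `S² ⊂ ℝ³`. -/
def sph : Set E3 := Metric.sphere 0 1

/-- Surface measure `σ` on the unit sphere `S²`, realized as the two-dimensional
Hausdorff measure on `ℝ³` restricted to the sphere. -/
def sphMeasure : Measure E3 := (μH[2]).restrict sph

section NullSets

variable {P Q : Type*} [NormedAddCommGroup P] [NormedSpace ℝ P] [FiniteDimensional ℝ P]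
  [MeasurableSpace P] [BorelSpace P] [NormedAddCommGroup Q] [NormedSpace ℝ Q]
  [MeasurableSpace Q] [BorelSpace Q]
  (μ : Measure P) [μ.IsAddHaarMeasure] (ν : Measure Q) [ν.IsAddHaarMeasure]

/-- A property that holds almost everywhere can be pulled back along a surjective linear map. -/
lemma ae_comp_of_surjective (L : P →L[ℝ] Q) (hL : Function.Surjective L) {p : Q → Prop}
    (hp : ∀ᵐ y ∂ν, p y) : ∀ᵐ x ∂μ, p (L x) := by
  obtain ⟨c, -, hc⟩ := (L : P →ₗ[ℝ] Q).exists_map_addHaar_eq_smul_addHaar μ ν hL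
  refine (Measure.QuasiMeasurePreserving.mk (μa := μ) (μb := ν) L.continuous.measurable ?_).ae hp
  change Measure.map (L : P →ₗ[ℝ] Q) μ ≪ ν
  rw [hc]
  exact Measure.smul_absolutelyContinuous

variable [FiniteDimensional ℝ Q]

/-- A differentiable map between spaces of the same dimension maps null sets to null sets. -/
lemma measure_image_null_of_finrank_eq (h : Module.finrank ℝ P = Module.finrank ℝ Q) {f : P → Q}
    {s : Set P} (hf : DifferentiableOn ℝ f s) (hs : μ s = 0) : ν (f '' s) = 0 := by
  let e : Q ≃L[ℝ] P := ContinuousLinearEquiv.ofFinrankEq h.symm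
  have h1 : μ ((e ∘ f) '' s) = 0 :=
    addHaar_image_eq_zero_of_differentiableOn_of_addHaar_eq_zero μ
      (e.differentiable.comp_differentiableOn hf) hs
  have h2 : ∀ᵐ x ∂μ, x ∉ (e ∘ f) '' s := measure_eq_zero_iff_ae_notMem.1 h1
  have h3 := ae_comp_of_surjective ν μ (e : Q →L[ℝ] P) e.surjective h2
  refine measure_eq_zero_iff_ae_notMem.2 (h3.mono fun y hy hy' => hy ?_)
  obtain ⟨x, hx, rfl⟩ := hy'
  exact ⟨x, hx, rfl⟩

/-- A map with a differentiable left inverse pulls back null sets to null sets. -/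
lemma ae_comp_of_leftInverse (h : Module.finrank ℝ P = Module.finrank ℝ Q) {T : P → Q} {g : Q → P}
    {D : Set P} {D' : Set Q} (hT : Set.MapsTo T D D') (hg : DifferentiableOn ℝ g D')
    (hgT : ∀ x ∈ D, g (T x) = x) {p : Q → Prop} (hp : ∀ᵐ y ∂ν, y ∈ D' → p y) :
    ∀ᵐ x ∂μ, x ∈ D → p (T x) := by
  have h0 : ν {y | ¬ (y ∈ D' → p y)} = 0 := hp
  have h1 := measure_image_null_of_finrank_eq ν μ h.symm
    (hg.mono (fun y hy => (Classical.not_imp.1 hy).1)) h0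
  filter_upwards [measure_eq_zero_iff_ae_notMem.1 h1] with x hx hxD
  by_contra hcon
  exact hx ⟨T x, fun hh => hcon (hh (hT hxD)), hgT x hxD⟩

/-- If a property holds at `f x` for almost all `x` near `a`, and `f` is a submersion at `a`, then
the property holds almost everywhere near `f a`. -/
lemma exists_nhds_ae_of_submersion {f : P → Q} {f' : P →L[ℝ] Q} {a : P}
    (hf : HasStrictFDerivAt f f' a) (hd : ∀ᶠ x in nhds a, DifferentiableAt ℝ f x)
    (hf' : Function.Surjective f') {p : Q → Prop} {U : Set P} (hU : U ∈ nhds a)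
    (hp : ∀ᵐ x ∂μ, x ∈ U → p (f x)) :
    ∃ V ∈ nhds (f a), ∀ᵐ y ∂ν, y ∈ V → p y := by
  obtain ⟨π, hπ⟩ := f'.ker_closedComplemented_of_finiteDimensional_range
  have hF' : HasStrictFDerivAt (fun x => (f x, π x)) (f'.prod π) a :=
    hf.prodMk π.hasStrictFDerivAt
  have hker : ∀ x, f' x = 0 → π x = 0 → x = 0 := by
    intro x hx hx'
    have := hπ ⟨x, hx⟩
    rw [hx'] at this
    exact (congrArg Subtype.val this).symm
  have hinj : Function.Injective (f'.prod π) := by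
    refine (injective_iff_map_eq_zero _).2 fun x hx => ?_
    rw [ContinuousLinearMap.prod_apply, Prod.mk_eq_zero] at hx
    exact hker x hx.1 hx.2
  have hsurj : Function.Surjective (f'.prod π) := by
    rintro ⟨q, k⟩
    obtain ⟨x, rfl⟩ := hf' q
    refine ⟨x + (k - π x : f'.ker), ?_⟩
    have h1 : f' ((k - π x : f'.ker) : P) = 0 := (k - π x).2
    have h2 : π ((k - π x : f'.ker) : P) = k - π x := hπ _
    rw [ContinuousLinearMap.prod_apply, map_add, map_add, h1, h2]
    simp
  have hrank : Module.finrank ℝ P = Module.finrank ℝ (Q × f'.ker) :=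
    (LinearEquiv.ofBijective ((f'.prod π : P →L[ℝ] Q × f'.ker) : P →ₗ[ℝ] Q × f'.ker)
      ⟨hinj, hsurj⟩).finrank_eq
  let κ : Measure f'.ker := Measure.addHaar
  obtain ⟨W, hW, hWd⟩ := Filter.eventually_iff_exists_mem.1 hd
  have hmem : (fun x => (f x, π x)) '' (U ∩ W) ∈ nhds (f a, π a) := by
    rw [← hF'.map_nhds_eq_of_surj (LinearMap.range_eq_top.2 hsurj)]
    exact Filter.image_mem_map (Filter.inter_mem hU hW)
  obtain ⟨V, hV, K, hK, hVK⟩ := mem_nhds_prod_iff.1 hmem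
  refine ⟨V, hV, ?_⟩
  have hnull := measure_image_null_of_finrank_eq μ (ν.prod κ) hrank (f := fun x => (f x, π x))
    (s := {x | ¬ (x ∈ U → p (f x))} ∩ W)
    (fun x hx => ((hWd x hx.2).prodMk π.differentiableAt).differentiableWithinAt)
    (measure_mono_null Set.inter_subset_left hp)
  have hsub : {y | ¬ (y ∈ V → p y)} ×ˢ K ⊆
      (fun x => (f x, π x)) '' ({x | ¬ (x ∈ U → p (f x))} ∩ W) := by
    rintro ⟨y, k⟩ ⟨hy, hk⟩
    obtain ⟨hyV, hyp⟩ := Classical.not_imp.1 hy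
    obtain ⟨x, hx, hxe⟩ := hVK (Set.mk_mem_prod hyV hk)
    refine ⟨x, ⟨fun hh => hyp ?_, hx.2⟩, hxe⟩
    have : f x = y := congrArg Prod.fst hxe
    exact this ▸ hh hx.1
  have h0 := measure_mono_null hsub hnull
  rw [Measure.prod_prod, mul_eq_zero] at h0
  exact h0.resolve_right (Measure.measure_pos_of_mem_nhds κ hK).ne'

end NullSets

/-- The direction `x / ‖x‖` of a vector `x`. -/
def unitVec (x : E3) : E3 := ‖x‖⁻¹ • x

lemma norm_unitVec {x : E3} (hx : x ≠ 0) : ‖unitVec x‖ = 1 := by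
  rw [unitVec, norm_smul, norm_inv, norm_norm, inv_mul_cancel₀ (norm_ne_zero_iff.2 hx)]

lemma unitVec_of_norm_eq_one {x : E3} (hx : ‖x‖ = 1) : unitVec x = x := by
  rw [unitVec, hx, inv_one, one_smul]

lemma norm_smul_unitVec (x : E3) : ‖x‖ • unitVec x = x := by
  rcases eq_or_ne x 0 with rfl | hx
  · simp
  · rw [unitVec, smul_inv_smul₀ (norm_ne_zero_iff.2 hx)]

lemma unitVec_smul {r : ℝ} (hr : 0 < r) (x : E3) : unitVec (r • x) = unitVec x := by
  rw [unitVec, unitVec, norm_smul, Real.norm_of_nonneg hr.le, smul_smul, mul_inv, mul_right_comm,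
    inv_mul_cancel₀ hr.ne', one_mul]

lemma measurable_unitVec : Measurable unitVec := by
  unfold unitVec; fun_prop

lemma contDiffAt_unitVec {x : E3} (hx : x ≠ 0) {n : WithTop ℕ∞} : ContDiffAt ℝ n unitVec x :=
  ((contDiffAt_norm ℝ hx).inv (norm_ne_zero_iff.2 hx)).smul contDiffAt_id

lemma norm_unitVec_sub_le {x y : E3} (hx : 1 ≤ ‖x‖) (hy : 1 ≤ ‖y‖) :
    ‖unitVec x - unitVec y‖ ≤ 2 * ‖x - y‖ := by
  have hx0 : 0 < ‖x‖ := by linarith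
  have hy0 : 0 < ‖y‖ := by linarith
  have key : unitVec x - unitVec y = ‖x‖⁻¹ • ((x - y) + (‖y‖ - ‖x‖) • unitVec y) := by
    rw [sub_smul, norm_smul_unitVec, sub_add_sub_cancel, smul_sub, inv_smul_smul₀ hx0.ne']
    rfl
  rw [key, norm_smul, norm_inv, norm_norm]
  have h1 : ‖(x - y) + (‖y‖ - ‖x‖) • unitVec y‖ ≤ 2 * ‖x - y‖ := by
    refine (norm_add_le _ _).trans ?_
    rw [norm_smul, norm_unitVec (norm_pos_iff.1 hy0), mul_one]
    have h3 : ‖‖y‖ - ‖x‖‖ ≤ ‖x - y‖ := by rw [norm_sub_rev x y]; exact abs_norm_sub_norm_le y x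
    linarith
  calc ‖x‖⁻¹ * _ ≤ 1 * (2 * ‖x - y‖) := by
        gcongr
        exact inv_le_one_of_one_le₀ hx
    _ = _ := one_mul _

lemma finrank_orthogonal_span_singleton_E3 {v : E3} (hv : v ≠ 0) :
    Module.finrank ℝ (ℝ ∙ v)ᗮ = 2 := by
  have : Fact (Module.finrank ℝ E3 = 2 + 1) := ⟨by simp⟩
  exact Submodule.finrank_orthogonal_span_singleton hv

lemma isAddHaarMeasure_hausdorffMeasure_two {v : E3} (hv : v ≠ 0) :
    (μH[2] : Measure (ℝ ∙ v)ᗮ).IsAddHaarMeasure := by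
  have := isAddHaarMeasure_hausdorffMeasure (E := (ℝ ∙ v)ᗮ)
  rw [finrank_orthogonal_span_singleton_E3 hv] at this
  exact_mod_cast this

/-- The part of the sphere near a given point has finite Hausdorff measure. -/
lemma hausdorffMeasure_cap_lt_top {v : E3} (hv : ‖v‖ = 1) :
    μH[2] {x ∈ sph | 1 / 2 < ⟪v, x⟫} < ∞ := by
  have hv0 : v ≠ 0 := norm_ne_zero_iff.1 (by rw [hv]; exact one_ne_zero)
  have := isAddHaarMeasure_hausdorffMeasure_two hv0
  let f : (ℝ ∙ v)ᗮ → E3 := fun y => unitVec (v + y)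
  have hnorm : ∀ y : (ℝ ∙ v)ᗮ, 1 ≤ ‖v + (y : E3)‖ := by
    intro y
    have h1 : ⟪v, v + (y : E3)⟫ = 1 := by
      rw [inner_add_right, Submodule.mem_orthogonal_singleton_iff_inner_right.1 y.2,
        real_inner_self_eq_norm_sq, hv]
      norm_num
    have h2 := real_inner_le_norm v (v + (y : E3))
    rwa [h1, hv, one_mul] at h2
  have hf : LipschitzWith 2 f := by
    refine LipschitzWith.of_dist_le_mul fun y y' => ?_
    rw [dist_eq_norm, dist_eq_norm]
    refine (norm_unitVec_sub_le (hnorm y) (hnorm y')).trans (le_of_eq ?_)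
    rw [add_sub_add_left_eq_sub]
    rfl
  have hsub : {x ∈ sph | 1 / 2 < ⟪v, x⟫} ⊆ f '' closedBall 0 3 := by
    rintro x ⟨hx, hvx⟩
    have hx1 : ‖x‖ = 1 := by simpa [sph] using hx
    have hpos : 0 < ⟪v, x⟫ := by linarith
    refine ⟨⟨(⟪v, x⟫)⁻¹ • x - v, ?_⟩, ?_, ?_⟩
    · rw [Submodule.mem_orthogonal_singleton_iff_inner_right, inner_sub_right, inner_smul_right,
        real_inner_self_eq_norm_sq, hv, inv_mul_cancel₀ hpos.ne']
      norm_num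
    · rw [mem_closedBall_zero_iff]
      change ‖(⟪v, x⟫)⁻¹ • x - v‖ ≤ 3
      refine (norm_sub_le _ _).trans ?_
      rw [norm_smul, hx1, hv, mul_one, norm_inv, Real.norm_of_nonneg hpos.le]
      have : (⟪v, x⟫)⁻¹ ≤ 2 := by
        rw [inv_le_comm₀ hpos two_pos]; linarith
      linarith
    · change unitVec (v + ((⟪v, x⟫)⁻¹ • x - v)) = x
      rw [add_sub_cancel, unitVec_smul (inv_pos.2 hpos), unitVec_of_norm_eq_one hx1]
  refine (measure_mono hsub).trans_lt ((hf.hausdorffMeasure_image_le zero_le_two _).trans_lt ?_)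
  refine ENNReal.mul_lt_top (by simp) ?_
  exact (isCompact_closedBall _ _).measure_lt_top

instance : IsFiniteMeasure sphMeasure := by
  refine ⟨?_⟩
  rw [sphMeasure, Measure.restrict_apply_univ]
  refine (isCompact_sphere (0 : E3) 1).measure_lt_top_of_nhdsWithin fun x hx => ?_
  have hx1 : ‖x‖ = 1 := by simpa using hx
  refine ⟨{y ∈ sph | 1 / 2 < ⟪x, y⟫}, ?_, hausdorffMeasure_cap_lt_top hx1⟩
  refine Filter.inter_mem self_mem_nhdsWithin (mem_nhdsWithin_of_mem_nhds ?_)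
  refine (isOpen_lt (f := fun _ : E3 => (1 / 2 : ℝ)) (g := fun y : E3 => ⟪x, y⟫)
    continuous_const (by fun_prop)).mem_nhds ?_
  change 1 / 2 < ⟪x, x⟫
  rw [real_inner_self_eq_norm_sq, hx1]
  norm_num

/-- The cone over a set of vanishing surface measure is a Lebesgue null set. -/
lemma volume_cone_eq_zero {A : Set E3} (hA : μH[2] A = 0) :
    volume {x : E3 | x ≠ 0 ∧ unitVec x ∈ A} = 0 := by
  refine measure_null_of_locally_null _ fun x₀ hx₀ => ?_
  set v := unitVec x₀ with hvdef
  have hv : ‖v‖ = 1 := norm_unitVec hx₀.1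
  have hv0 : v ≠ 0 := norm_ne_zero_iff.1 (by rw [hv]; exact one_ne_zero)
  have := isAddHaarMeasure_hausdorffMeasure_two hv0
  let π := ((ℝ ∙ v)ᗮ).orthogonalProjectionOnto
  have hπA : μH[2] (π '' A) = 0 := le_antisymm
    ((hausdorffMeasure_orthogonalProjectionOnto_le _ 2 A zero_le_two).trans hA.le) zero_le
  let S : Set ((ℝ ∙ v)ᗮ × ℝ) := (π '' A ∩ ball 0 1) ×ˢ Set.univ
  have hS : (μH[2] : Measure (ℝ ∙ v)ᗮ).prod (volume : Measure ℝ) S = 0 := by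
    rw [Measure.prod_prod, measure_mono_null Set.inter_subset_left hπA, zero_mul]
  let g : (ℝ ∙ v)ᗮ × ℝ → E3 := fun q => q.2 • ((q.1 : E3) + √(1 - ‖q.1‖ ^ 2) • v)
  have hg : DifferentiableOn ℝ g S := by
    rintro ⟨y, r⟩ ⟨⟨-, hy⟩, -⟩
    have hy1 : ‖y‖ < 1 := by simpa using hy
    have hpos : (1 - ‖y‖ ^ 2) ≠ 0 := by nlinarith [norm_nonneg y]
    refine DifferentiableAt.differentiableWithinAt ?_
    refine DifferentiableAt.fun_smul
      (f := fun q : (ℝ ∙ v)ᗮ × ℝ => (q.1 : E3) + √(1 - ‖q.1‖ ^ 2) • v)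
      differentiableAt_snd (DifferentiableAt.fun_add ?_ ?_)
    · exact ((ℝ ∙ v)ᗮ.subtypeL.differentiableAt).comp _ differentiableAt_fst
    · have h : DifferentiableAt ℝ (fun q : (ℝ ∙ v)ᗮ × ℝ => 1 - ‖q.1‖ ^ 2) (y, r) :=
        (differentiableAt_const _).sub (differentiableAt_fst.norm_sq ℝ)
      exact (h.sqrt hpos).smul_const v
  have hrank : Module.finrank ℝ ((ℝ ∙ v)ᗮ × ℝ) = Module.finrank ℝ E3 := by
    rw [Module.finrank_prod, finrank_orthogonal_span_singleton_E3 hv0]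
    simp
  have himg := measure_image_null_of_finrank_eq _ (volume : Measure E3) hrank hg hS
  refine ⟨{x : E3 | x ≠ 0 ∧ unitVec x ∈ A} ∩ {x | 0 < ⟪v, x⟫}, ?_,
    measure_mono_null ?_ himg⟩
  · refine Filter.inter_mem self_mem_nhdsWithin (mem_nhdsWithin_of_mem_nhds ?_)
    refine (isOpen_lt (f := fun _ : E3 => (0 : ℝ)) (g := fun y : E3 => ⟪v, y⟫)
      continuous_const (by fun_prop)).mem_nhds ?_
    change 0 < ⟪v, x₀⟫
    rw [← norm_smul_unitVec x₀, inner_smul_right, ← hvdef, real_inner_self_eq_norm_sq, hv]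
    have := norm_pos_iff.2 hx₀.1
    positivity
  · rintro x ⟨⟨hx0, hxA⟩, hvx⟩
    set u := unitVec x with hu
    have hu1 : ‖u‖ = 1 := norm_unitVec hx0
    have hxpos := norm_pos_iff.2 hx0
    have hvu : 0 < ⟪v, u⟫ := by
      have : 0 < ⟪v, x⟫ := hvx
      rw [← norm_smul_unitVec x, inner_smul_right] at this
      exact (mul_pos_iff_of_pos_left hxpos).1 this
    have hdec : ((π u : (ℝ ∙ v)ᗮ) : E3) + ⟪v, u⟫ • v = u := by
      have h1 := Submodule.starProjection_add_starProjection_orthogonal (K := ℝ ∙ v) u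
      rw [Submodule.starProjection_unit_singleton ℝ hv u, add_comm] at h1
      exact h1
    have hnorm : ‖π u‖ ^ 2 + ⟪v, u⟫ ^ 2 = 1 := by
      have h1 : ⟪((π u : (ℝ ∙ v)ᗮ) : E3), v⟫ = 0 :=
        Submodule.mem_orthogonal_singleton_iff_inner_left.1 (π u).2
      have h2 : ‖u‖ ^ 2 = 1 := by rw [hu1, one_pow]
      rw [← hdec, @norm_add_sq_real, inner_smul_right, h1, norm_smul, hv] at h2
      simpa using h2
    refine ⟨(π u, ‖x‖), ⟨⟨⟨u, hxA, rfl⟩, ?_⟩, trivial⟩, ?_⟩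
    · rw [mem_ball_zero_iff]
      nlinarith [norm_nonneg (π u)]
    · change ‖x‖ • (((π u : (ℝ ∙ v)ᗮ) : E3) + √(1 - ‖π u‖ ^ 2) • v) = x
      rw [show 1 - ‖π u‖ ^ 2 = ⟪v, u⟫ ^ 2 by linarith, Real.sqrt_sq hvu.le, hdec,
        norm_smul_unitVec]

lemma quasiMeasurePreserving_unitVec :
    Measure.QuasiMeasurePreserving unitVec (volume : Measure E3) sphMeasure := by
  refine ⟨measurable_unitVec, Measure.AbsolutelyContinuous.mk fun s hs h0 => ?_⟩
  rw [sphMeasure, Measure.restrict_apply hs] at h0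
  rw [Measure.map_apply measurable_unitVec hs]
  refine measure_mono_null (t := {0} ∪ {x : E3 | x ≠ 0 ∧ unitVec x ∈ s ∩ sph}) (fun x hx => ?_)
    (measure_union_null (by simp) (volume_cone_eq_zero h0))
  rcases eq_or_ne x 0 with rfl | hx0
  · exact Or.inl rfl
  · exact Or.inr ⟨hx0, hx, by simpa [sph] using norm_unitVec hx0⟩

section Reflection

/-- The reflection of `x` in the plane orthogonal to `n`. -/
def mirror (n x : E3) : E3 := x - (2 * ⟪n, x⟫ / ⟪n, n⟫) • n

lemma mirror_add (n x y : E3) : mirror n (x + y) = mirror n x + mirror n y := by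
  rw [mirror, mirror, mirror, inner_add_right, mul_add, add_div, add_smul]
  abel

lemma mirror_smul (n : E3) (r : ℝ) (x : E3) : mirror n (r • x) = r • mirror n x := by
  rw [mirror, mirror, inner_smul_right, smul_sub, smul_smul]
  congr 2
  ring

lemma mirror_of_inner_eq_zero {n x : E3} (h : ⟪n, x⟫ = 0) : mirror n x = x := by
  simp [mirror, h]

lemma inner_mirror (n x : E3) : ⟪n, mirror n x⟫ = -⟪n, x⟫ := by
  rcases eq_or_ne n 0 with rfl | hn
  · simp
  · have h : ⟪n, n⟫ ≠ 0 := inner_self_ne_zero.2 hn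
    rw [mirror, inner_sub_right, inner_smul_right, div_mul_cancel₀ _ h]
    ring

lemma mirror_mirror (n x : E3) : mirror n (mirror n x) = x := by
  rw [mirror, inner_mirror, mirror]
  module

lemma norm_mirror (n x : E3) : ‖mirror n x‖ = ‖x‖ := by
  have h : ⟪mirror n x, mirror n x⟫ = ⟪x, x⟫ := by
    conv_lhs => enter [3]; rw [mirror]
    rw [inner_sub_right, inner_smul_right, real_inner_comm n (mirror n x), inner_mirror]
    conv_lhs => enter [1]; rw [mirror]
    rw [inner_sub_left, real_inner_smul_left]
    ring
  rw [real_inner_self_eq_norm_sq, real_inner_self_eq_norm_sq] at h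
  exact (pow_left_inj₀ (norm_nonneg _) (norm_nonneg _) two_ne_zero).1 h

lemma mirror_eq_zero_iff {n x : E3} : mirror n x = 0 ↔ x = 0 := by
  rw [← norm_eq_zero, norm_mirror, norm_eq_zero]

lemma unitVec_mirror (n x : E3) : unitVec (mirror n x) = mirror n (unitVec x) := by
  rw [unitVec, norm_mirror, unitVec, mirror_smul]

/-- The component of `e` orthogonal to `c`. -/
def perpPart (c e : E3) : E3 := e - (⟪c, e⟫ / ⟪c, c⟫) • c

lemma inner_perpPart (c e : E3) : ⟪c, perpPart c e⟫ = 0 := by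
  rcases eq_or_ne c 0 with rfl | hc
  · simp
  · rw [perpPart, inner_sub_right, inner_smul_right, div_mul_cancel₀ _ (inner_self_ne_zero.2 hc),
      sub_self]

variable {V : Type*} [NormedAddCommGroup V] [NormedSpace ℝ V] {f g : V → E3} {p : V}

lemma ContDiffAt.mirror {k : WithTop ℕ∞} (hf : ContDiffAt ℝ k f p) (hg : ContDiffAt ℝ k g p)
    (h : f p ≠ 0) : ContDiffAt ℝ k (fun q => mirror (f q) (g q)) p :=
  hg.sub (((contDiffAt_const.mul (hf.inner ℝ hg)).div (hf.inner ℝ hf)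
    (inner_self_ne_zero.2 h)).smul hf)

lemma ContDiffAt.perpPart {k : WithTop ℕ∞} (hf : ContDiffAt ℝ k f p) (hg : ContDiffAt ℝ k g p)
    (h : f p ≠ 0) : ContDiffAt ℝ k (fun q => perpPart (f q) (g q)) p :=
  hg.sub (((hf.inner ℝ hg).div (hf.inner ℝ hf) (inner_self_ne_zero.2 h)).smul hf)

lemma ContDiffAt.unitVec {k : WithTop ℕ∞} (hf : ContDiffAt ℝ k f p) (h : f p ≠ 0) :
    ContDiffAt ℝ k (fun q => unitVec (f q)) p :=
  (contDiffAt_unitVec h).comp p hf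

end Reflection

instance : (volume : Measure (E3 × E3)).IsAddHaarMeasure :=
  Measure.prod.instIsAddHaarMeasure volume volume

instance : (volume : Measure (E3 × E3 × E3)).IsAddHaarMeasure :=
  Measure.prod.instIsAddHaarMeasure volume volume

instance : (volume : Measure (E3 × E3 × E3 × E3)).IsAddHaarMeasure :=
  Measure.prod.instIsAddHaarMeasure volume volume

instance : (volume : Measure (E3 × E3 × E3 × E3 × E3)).IsAddHaarMeasure :=
  Measure.prod.instIsAddHaarMeasure volume volume

/-- Four vectors, standing for their directions, and an auxiliary fifth one. -/
abbrev Conf : Type := E3 × E3 × E3 × E3 × E3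

namespace Conf

/-- The sum of the second and the third direction. -/
def center (p : Conf) : E3 := unitVec p.2.1 + unitVec p.2.2.1

/-- The normal of the reflection attached to a configuration. -/
def normal (p : Conf) : E3 := perpPart p.center p.2.2.2.2

/-- Reflect the second and the third vector in a plane containing `center`. -/
def flip (p : Conf) : Conf :=
  (p.1, mirror p.normal p.2.1, mirror p.normal p.2.2.1, p.2.2.2.1, p.2.2.2.2)

/-- The configurations at which `flip` is smooth. -/
def regular : Set Conf := {p | p.2.1 ≠ 0 ∧ p.2.2.1 ≠ 0 ∧ p.center ≠ 0 ∧ p.normal ≠ 0}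

/-- The sum of the four directions. -/
def total (p : Conf) : E3 :=
  unitVec p.1 + unitVec p.2.1 + (unitVec p.2.2.1 + unitVec p.2.2.2.1)

/-- The sum of the first two directions after the reflection. -/
def flipped (p : Conf) : E3 := unitVec p.1 + mirror p.normal (unitVec p.2.1)

/-- The total sum, together with the sum of the first two directions before and after `flip`. -/
def sums (p : Conf) : E3 × E3 × E3 := (p.total, unitVec p.1 + unitVec p.2.1, p.flipped)

lemma inner_normal_center (p : Conf) : ⟪p.normal, p.center⟫ = 0 := by
  rw [real_inner_comm]; exact inner_perpPart _ _

lemma mirror_add_mirror (p : Conf) :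
    mirror p.normal (unitVec p.2.1) + mirror p.normal (unitVec p.2.2.1)
      = unitVec p.2.1 + unitVec p.2.2.1 := by
  rw [← mirror_add]; exact mirror_of_inner_eq_zero p.inner_normal_center

lemma center_flip (p : Conf) : p.flip.center = p.center := by
  change unitVec (mirror p.normal p.2.1) + unitVec (mirror p.normal p.2.2.1) = _
  rw [unitVec_mirror, unitVec_mirror, mirror_add_mirror]
  rfl

lemma normal_flip (p : Conf) : p.flip.normal = p.normal := by
  change perpPart p.flip.center p.2.2.2.2 = _
  rw [center_flip]
  rfl

lemma flip_flip (p : Conf) : p.flip.flip = p := by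
  change (p.1, mirror p.flip.normal (mirror p.normal p.2.1),
    mirror p.flip.normal (mirror p.normal p.2.2.1), p.2.2.2.1, p.2.2.2.2) = p
  rw [normal_flip, mirror_mirror, mirror_mirror]

lemma flip_mem_regular {p : Conf} (hp : p ∈ regular) : p.flip ∈ regular := by
  refine ⟨mt mirror_eq_zero_iff.1 hp.1, mt mirror_eq_zero_iff.1 hp.2.1, ?_, ?_⟩
  · rw [center_flip]; exact hp.2.2.1
  · rw [normal_flip]; exact hp.2.2.2

lemma contDiffAt_center {p : Conf} (hp : p ∈ regular) : ContDiffAt ℝ 1 center p :=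
  ContDiffAt.add (f := fun q : Conf => unitVec q.2.1) (g := fun q : Conf => unitVec q.2.2.1)
    (.unitVec (by fun_prop) hp.1) (.unitVec (by fun_prop) hp.2.1)

lemma contDiffAt_normal {p : Conf} (hp : p ∈ regular) : ContDiffAt ℝ 1 normal p :=
  (contDiffAt_center hp).perpPart (by fun_prop) hp.2.2.1

lemma contDiffAt_flip {p : Conf} (hp : p ∈ regular) : ContDiffAt ℝ 1 flip p :=
  contDiffAt_fst.prodMk <|
    ((contDiffAt_normal hp).mirror (by fun_prop) hp.2.2.2).prodMk <|
    ((contDiffAt_normal hp).mirror (by fun_prop) hp.2.2.2).prodMk (by fun_prop)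

lemma contDiffAt_sums {p : Conf} (hp : p ∈ regular) (h₁ : p.1 ≠ 0) (h₄ : p.2.2.2.1 ≠ 0) :
    ContDiffAt ℝ 1 sums p := by
  have k₁ : ContDiffAt ℝ 1 (fun q : Conf => unitVec q.1) p := .unitVec (by fun_prop) h₁
  have k₂ : ContDiffAt ℝ 1 (fun q : Conf => unitVec q.2.1) p := .unitVec (by fun_prop) hp.1
  have k₃ : ContDiffAt ℝ 1 (fun q : Conf => unitVec q.2.2.1) p := .unitVec (by fun_prop) hp.2.1
  have k₄ : ContDiffAt ℝ 1 (fun q : Conf => unitVec q.2.2.2.1) p := .unitVec (by fun_prop) h₄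
  exact ((k₁.add k₂).add (k₃.add k₄)).prodMk <| (k₁.add k₂).prodMk <|
    k₁.add ((contDiffAt_normal hp).mirror k₂ hp.2.2.2)

lemma isOpen_regular : IsOpen regular := by
  rw [isOpen_iff_mem_nhds]
  intro p hp
  have h₁ : ∀ᶠ q : Conf in nhds p, q.2.1 ≠ 0 :=
    ContinuousAt.eventually_ne (g := fun q : Conf => q.2.1) (by fun_prop) hp.1
  have h₂ : ∀ᶠ q : Conf in nhds p, q.2.2.1 ≠ 0 :=
    ContinuousAt.eventually_ne (g := fun q : Conf => q.2.2.1) (by fun_prop) hp.2.1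
  filter_upwards [h₁, h₂, (contDiffAt_center hp).continuousAt.eventually_ne hp.2.2.1,
    (contDiffAt_normal hp).continuousAt.eventually_ne hp.2.2.2] with q a b c d
  exact ⟨a, b, c, d⟩

end Conf

section AsymptoticRelation

variable {u v : ℕ → E3 → ℂ}

/-- The products `v n z * v n (s - z)` and `v n w * v n (s - w)` agree asymptotically, where
`q = (s, z, w)`. -/
def SumRel (v : ℕ → E3 → ℂ) (q : E3 × E3 × E3) : Prop :=
  Tendsto (fun n => v n q.2.1 * v n (q.1 - q.2.1) - v n q.2.2 * v n (q.1 - q.2.2)) atTop (nhds 0)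

lemma SumRel.symm {s z w : E3} (h : SumRel v (s, z, w)) : SumRel v (s, w, z) := by
  simpa [SumRel] using h.neg

lemma SumRel.trans {s z w y : E3} (h : SumRel v (s, z, w)) (h' : SumRel v (s, w, y)) :
    SumRel v (s, z, y) := by
  simpa [SumRel] using h.add h'

lemma tendsto_mul_sub_mul_zero {a b c d : ℕ → ℂ} (hb : ∀ n, ‖b n‖ = 1) (hc : ∀ n, ‖c n‖ = 1)
    (h : Tendsto (fun n => a n - b n) atTop (nhds 0))
    (h' : Tendsto (fun n => c n - d n) atTop (nhds 0)) :
    Tendsto (fun n => a n * c n - b n * d n) atTop (nhds 0) := by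
  refine squeeze_zero_norm (fun n => ?_) (by simpa using h.norm.add h'.norm)
  calc ‖a n * c n - b n * d n‖ = ‖(a n - b n) * c n + b n * (c n - d n)‖ := by congr 1; ring
    _ ≤ ‖(a n - b n) * c n‖ + ‖b n * (c n - d n)‖ := norm_add_le _ _
    _ = ‖a n - b n‖ + ‖c n - d n‖ := by rw [norm_mul, norm_mul, hb, hc, one_mul, mul_one]

/-- The approximate functional equation at a pair of points of the sphere. -/
def Good (u v : ℕ → E3 → ℂ) (x y : E3) : Prop :=
  Tendsto (fun n => u n x * u n y - v n (x + y)) atTop (nhds 0)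

lemma Good.mul_sub_mul (hu : ∀ n x, ‖u n x‖ = 1) (hv : ∀ n x, ‖v n x‖ = 1) {x₁ x₂ x₃ x₄ : E3}
    (h : Good u v x₁ x₂) (h' : Good u v x₃ x₄) :
    Tendsto (fun n => u n x₁ * u n x₂ * (u n x₃ * u n x₄) - v n (x₁ + x₂) * v n (x₃ + x₄))
      atTop (nhds 0) :=
  tendsto_mul_sub_mul_zero (fun n => hv n _) (fun n => by rw [norm_mul, hu, hu, one_mul]) h h'

lemma sumRel_of_good (hu : ∀ n x, ‖u n x‖ = 1) (hv : ∀ n x, ‖v n x‖ = 1)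
    {x₁ x₂ x₃ x₄ y₂ y₃ : E3} (hy : y₂ + y₃ = x₂ + x₃) (h₁₂ : Good u v x₁ x₂)
    (h₃₄ : Good u v x₃ x₄) (h₂₃ : Good u v x₂ x₃) (k₁₂ : Good u v x₁ y₂) (k₃₄ : Good u v y₃ x₄)
    (k₂₃ : Good u v y₂ y₃) : SumRel v (x₁ + x₂ + (x₃ + x₄), x₁ + x₂, x₁ + y₂) := by
  have e : x₁ + x₂ + (x₃ + x₄) - (x₁ + y₂) = y₃ + x₄ := by
    rw [show y₃ = x₂ + x₃ - y₂ by rw [← hy]; abel]; abel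
  have h₁ := h₁₂.mul_sub_mul hu hv h₃₄
  have h₂ := k₁₂.mul_sub_mul hu hv k₃₄
  have h₃ : Tendsto (fun n => u n x₂ * u n x₃ - u n y₂ * u n y₃) atTop (nhds 0) := by
    have := Tendsto.sub h₂₃ k₂₃
    simpa [hy] using this
  have h₄ : Tendsto (fun n => (u n x₂ * u n x₃) * (u n x₁ * u n x₄)
      - (u n y₂ * u n y₃) * (u n x₁ * u n x₄)) atTop (nhds 0) :=
    tendsto_mul_sub_mul_zero (fun n => by rw [norm_mul, hu, hu, one_mul])
      (fun n => by rw [norm_mul, hu, hu, one_mul]) h₃ (by simp)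
  have h := (h₄.sub h₁).add h₂
  rw [sub_zero, add_zero] at h
  refine h.congr fun n => ?_
  simp only [e, add_sub_cancel_left]
  ring

lemma ae_sumRel_sums (hu : ∀ n x, ‖u n x‖ = 1) (hv : ∀ n x, ‖v n x‖ = 1)
    (hg : ∀ᵐ q : E3 × E3, Good u v (unitVec q.1) (unitVec q.2)) :
    ∀ᵐ p : Conf, p ∈ Conf.regular → SumRel v p.sums := by
  let T (p : Conf) : Prop := Good u v (unitVec p.1) (unitVec p.2.1) ∧
    Good u v (unitVec p.2.2.1) (unitVec p.2.2.2.1) ∧ Good u v (unitVec p.2.1) (unitVec p.2.2.1)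
  have hT : ∀ᵐ p : Conf, T p := by
    let π₁ : Conf →L[ℝ] E3 := .fst ℝ E3 _
    let τ : Conf →L[ℝ] E3 × E3 × E3 × E3 := .snd ℝ E3 _
    let π₂ : Conf →L[ℝ] E3 := .comp (.fst ℝ E3 _) τ
    let π₃ : Conf →L[ℝ] E3 := .comp (.comp (.fst ℝ E3 _) (.snd ℝ E3 _)) τ
    let π₄ : Conf →L[ℝ] E3 :=
      .comp (.comp (.comp (.fst ℝ E3 _) (.snd ℝ E3 _)) (.snd ℝ E3 _)) τ
    have h₁₂ := ae_comp_of_surjective volume volume (π₁.prod π₂)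
      (fun q => ⟨(q.1, q.2, 0, 0, 0), rfl⟩) hg
    have h₃₄ := ae_comp_of_surjective volume volume (π₃.prod π₄)
      (fun q => ⟨(0, 0, q.1, q.2, 0), rfl⟩) hg
    have h₂₃ := ae_comp_of_surjective volume volume (π₂.prod π₃)
      (fun q => ⟨(0, q.1, q.2, 0, 0), rfl⟩) hg
    filter_upwards [h₁₂, h₃₄, h₂₃] with p a b c
    exact ⟨a, b, c⟩
  have hT' : ∀ᵐ p : Conf, p ∈ Conf.regular → T p.flip :=
    ae_comp_of_leftInverse volume volume rfl (fun p hp => Conf.flip_mem_regular hp)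
      (fun p hp => ((Conf.contDiffAt_flip hp).differentiableAt one_ne_zero).differentiableWithinAt)
      (fun p _ => p.flip_flip) (hT.mono fun p hp _ => hp)
  filter_upwards [hT, hT'] with p ⟨h₁₂, h₃₄, h₂₃⟩ hp' hp
  obtain ⟨k₁₂, k₃₄, k₂₃⟩ := hp' hp
  simp only [Conf.flip, unitVec_mirror] at k₁₂ k₃₄ k₂₃
  exact sumRel_of_good hu hv p.mirror_add_mirror h₁₂ h₃₄ h₂₃ k₁₂ k₃₄ k₂₃

end AsymptoticRelation

section Submersion

lemma exists_norm_eq_one_inner_eq_zero (a b : E3) :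
    ∃ m : E3, ‖m‖ = 1 ∧ ⟪a, m⟫ = 0 ∧ ⟪b, m⟫ = 0 := by
  let S : Submodule ℝ E3 := Submodule.span ℝ {a, b}
  have hS : S ≠ ⊤ := fun h => by
    have h₁ : Module.finrank ℝ S ≤ 2 := by
      refine (finrank_span_le_card (R := ℝ) ({a, b} : Set E3)).trans ?_
      rw [Set.toFinset_card, ← Nat.card_eq_fintype_card, Nat.card_coe_set_eq]
      simpa using Set.ncard_insert_le a {b}
    rw [h, finrank_top] at h₁
    simp at h₁
  obtain ⟨x, hx, hx0⟩ := (Submodule.ne_bot_iff Sᗮ).1 (mt Submodule.orthogonal_eq_bot_iff.1 hS)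
  refine ⟨unitVec x, norm_unitVec hx0, ?_, ?_⟩
  · rw [unitVec, inner_smul_right, hx a (Submodule.subset_span (by simp)), mul_zero]
  · rw [unitVec, inner_smul_right, hx b (Submodule.subset_span (by simp)), mul_zero]

lemma eq_zero_of_inner_eq_zero {a b c x : E3} (ha : a ≠ 0) (hb : b ≠ 0) (hc : c ≠ 0)
    (hab : ⟪a, b⟫ = 0) (hac : ⟪a, c⟫ = 0) (hbc : ⟪b, c⟫ = 0) (hxa : ⟪x, a⟫ = 0)
    (hxb : ⟪x, b⟫ = 0) (hxc : ⟪x, c⟫ = 0) : x = 0 := by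
  by_contra hx
  have hli : LinearIndependent ℝ ![x, a, b, c] := by
    refine linearIndependent_of_ne_zero_of_inner_eq_zero ?_ ?_
    · intro i; fin_cases i <;> simpa
    · intro i j hij
      fin_cases i <;> fin_cases j <;>
        first | exact absurd rfl hij | simpa | (rw [real_inner_comm]; simpa)
  simpa using hli.fintype_card_le_finrank

lemma exists_hasFDerivAt_unitVec {x : E3} (hx : ‖x‖ = 1) :
    ∃ N : E3 →L[ℝ] E3, HasFDerivAt unitVec N x ∧ ∀ d, ⟪x, d⟫ = 0 → N d = d := by
  have hx0 : x ≠ 0 := norm_ne_zero_iff.1 (by rw [hx]; exact one_ne_zero)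
  have hN := ((contDiffAt_unitVec hx0 (n := 1)).differentiableAt one_ne_zero).hasFDerivAt
  have hn := ((contDiffAt_norm ℝ hx0 (n := 1)).differentiableAt one_ne_zero).hasFDerivAt
  refine ⟨_, hN, fun d hd => ?_⟩
  have h₁ := hn.smul hN
  have h₂ := h₁.unique ((hasFDerivAt_id x).congr_of_eventuallyEq
    (Eventually.of_forall fun y => norm_smul_unitVec y))
  have h₃ : ⟪x, fderiv ℝ unitVec x d⟫ = 0 := by
    have h₄ := hN.norm_sq.unique ((hasFDerivAt_const (1 : ℝ) x).congr_of_eventuallyEq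
      ((eventually_ne_nhds hx0).mono fun y hy => by
        change ‖unitVec y‖ ^ 2 = 1
        rw [norm_unitVec hy, one_pow]))
    have h₅ := DFunLike.congr_fun h₄ d
    simpa [unitVec_of_norm_eq_one hx] using h₅
  have h₆ := DFunLike.congr_fun h₂ d
  simp only [hx, unitVec_of_norm_eq_one hx, one_smul, add_apply,
    ContinuousLinearMap.smulRight_apply, ContinuousLinearMap.id_apply] at h₆
  have h₇ := congrArg (fun y => ⟪x, y⟫) h₆
  simp only [inner_add_right, inner_smul_right, h₃, hd, real_inner_self_eq_norm_sq, hx] at h₇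
  have h₈ : fderiv ℝ (fun y : E3 => ‖y‖) x d = 0 := by linarith
  rw [h₈, zero_smul, add_zero] at h₆
  exact h₆

lemma exists_inner_eq {z k m : E3} {s t : ℝ} (hz : z ≠ 0) (hk : ‖k‖ = 1) (hm : ‖m‖ = 1)
    (hzk : ⟪z, k⟫ = 0) (hzm : ⟪z, m⟫ = 0) (hkm : ⟪k, m⟫ = 0) (hs : s ≠ 0) (ht : t ≠ 0) (a b : ℝ) :
    ∃ d : E3, ⟪(1 / 2 : ℝ) • z - s • k - t • m, d⟫ = 0 ∧ ⟪(1 / 2 : ℝ) • z + s • k + t • m, d⟫ = a ∧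
      ⟪(1 / 2 : ℝ) • z + s • k - t • m, d⟫ = b := by
  have hzz : ⟪z, z⟫ ≠ 0 := inner_self_ne_zero.2 hz
  refine ⟨(a / ⟪z, z⟫) • z + (b / (2 * s)) • k + ((a - b) / (2 * t)) • m, ?_, ?_, ?_⟩ <;>
  · simp only [inner_add_left, inner_sub_left, inner_add_right, real_inner_smul_left,
      inner_smul_right, hzk, hzm, hkm, real_inner_comm z k, real_inner_comm z m,
      real_inner_comm k m, real_inner_self_eq_norm_sq k, real_inner_self_eq_norm_sq m, hk, hm]
    field_simp
    ring

namespace Conf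

lemma mem_regular_of_base {x₁ x₂ x₃ x₄ m : E3} (h₂ : ‖x₂‖ = 1) (h₃ : ‖x₃‖ = 1) (hm : ‖m‖ = 1)
    (hcm : ⟪x₂ + x₃, m⟫ = 0) (hc : x₂ + x₃ ≠ 0) : (x₁, x₂, x₃, x₄, m) ∈ regular := by
  have e : center (x₁, x₂, x₃, x₄, m) = x₂ + x₃ := by
    simp [center, unitVec_of_norm_eq_one, h₂, h₃]
  refine ⟨norm_ne_zero_iff.1 (h₂.trans_ne one_ne_zero),
    norm_ne_zero_iff.1 (h₃.trans_ne one_ne_zero), by rwa [e], ?_⟩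
  simpa [normal, e, perpPart, hcm] using norm_ne_zero_iff.1 (hm.trans_ne one_ne_zero)

/-- The derivative of the reflected direction in the direction of the auxiliary vector. -/
lemma hasDerivAt_mirror {m g x : E3} (hm : ‖m‖ = 1) (hmg : ⟪m, g⟫ = 0) :
    HasDerivAt (fun τ : ℝ => mirror (m + τ • g) x)
      (-((2 * ⟪m, x⟫) • g + (2 * ⟪g, x⟫) • m)) 0 := by
  have hn : HasDerivAt (fun τ : ℝ => m + τ • g) g 0 := by
    simpa using ((hasDerivAt_id (0 : ℝ)).smul_const g).const_add m
  have hnum := ((hn.inner ℝ (hasDerivAt_const (0 : ℝ) x)).const_mul 2)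
  have hden := hn.inner ℝ hn
  have h := ((hnum.fun_div hden (by simp [hm])).fun_smul hn).const_sub x
  refine h.congr_deriv ?_
  simp [hm, hmg, real_inner_comm m g]

lemma exists_surjective_hasFDerivAt_sums {x₁ x₂ x₃ x₄ m : E3} (h₁ : ‖x₁‖ = 1) (h₂ : ‖x₂‖ = 1)
    (h₃ : ‖x₃‖ = 1) (h₄ : ‖x₄‖ = 1) (hm : ‖m‖ = 1) (hcm : ⟪x₂ + x₃, m⟫ = 0) (hc : x₂ + x₃ ≠ 0)
    (ht : ⟪m, x₂⟫ ≠ 0)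
    (H₁ : ∀ a b : ℝ, ∃ d : E3, ⟪x₁, d⟫ = 0 ∧ ⟪x₂, d⟫ = a ∧ ⟪mirror m x₂, d⟫ = b)
    (H₄ : ∀ a b : ℝ, ∃ d : E3, ⟪x₄, d⟫ = 0 ∧ ⟪x₃, d⟫ = a ∧ ⟪mirror m x₃, d⟫ = b) :
    ∃ L : Conf →L[ℝ] E3 × E3 × E3, HasFDerivAt sums L (x₁, x₂, x₃, x₄, m) ∧
      Function.Surjective L := by
  set p : Conf := (x₁, x₂, x₃, x₄, m)
  have hreg : p ∈ regular := mem_regular_of_base h₂ h₃ hm hcm hc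
  have hp₂ : unitVec p.2.1 = x₂ := unitVec_of_norm_eq_one h₂
  have hp₃ : unitVec p.2.2.1 = x₃ := unitVec_of_norm_eq_one h₃
  have hcenter : p.center = x₂ + x₃ := by rw [center, hp₂, hp₃]
  have hnormal : p.normal = m := by
    rw [normal, hcenter, perpPart]
    change m - (⟪x₂ + x₃, m⟫ / _) • (x₂ + x₃) = m
    rw [hcm, zero_div, zero_smul, sub_zero]
  obtain ⟨N₁, hN₁, hN₁'⟩ := exists_hasFDerivAt_unitVec h₁
  obtain ⟨N₂, hN₂, hN₂'⟩ := exists_hasFDerivAt_unitVec h₂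
  obtain ⟨N₃, hN₃, hN₃'⟩ := exists_hasFDerivAt_unitVec h₃
  obtain ⟨N₄, hN₄, hN₄'⟩ := exists_hasFDerivAt_unitVec h₄
  have k₁ := HasFDerivAt.comp (f := fun q : Conf => q.1) p hN₁ hasFDerivAt_fst
  have k₂ := HasFDerivAt.comp (f := fun q : Conf => q.2.1) p hN₂ hasFDerivAt_snd.fst
  have k₃ := HasFDerivAt.comp (f := fun q : Conf => q.2.2.1) p hN₃ hasFDerivAt_snd.snd.fst
  have k₄ := HasFDerivAt.comp (f := fun q : Conf => q.2.2.2.1) p hN₄ hasFDerivAt_snd.snd.snd.fst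
  have hy : mirror m x₂ + mirror m x₃ = x₂ + x₃ := by
    rw [← mirror_add]; exact mirror_of_inner_eq_zero (by rw [real_inner_comm]; exact hcm)
  let Y : Conf → E3 := fun q => mirror q.normal (unitVec q.2.1)
  have hYp : Y p = mirror m x₂ := by simp only [Y, hnormal, hp₂]
  have hY : HasFDerivAt Y (fderiv ℝ Y p) p :=
    (((contDiffAt_normal hreg).mirror (ContDiffAt.unitVec (by fun_prop) hreg.1)
      hreg.2.2.2).differentiableAt one_ne_zero).hasFDerivAt
  set Y' := fderiv ℝ Y p
  -- the reflected vectors stay on the sphere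
  have hY₂ : ∀ d, ⟪mirror m x₂, Y' d⟫ = 0 := by
    intro d
    have e := hY.norm_sq.unique ((hasFDerivAt_const (1 : ℝ) p).congr_of_eventuallyEq
      ((isOpen_regular.eventually_mem hreg).mono fun q hq => by
        change ‖mirror q.normal (unitVec q.2.1)‖ ^ 2 = 1
        rw [norm_mirror, norm_unitVec hq.1, one_pow]))
    simpa [hYp] using DFunLike.congr_fun e d
  have hY₃ : ∀ d : Conf, ⟪mirror m x₃, N₂ d.2.1 + N₃ d.2.2.1 - Y' d⟫ = 0 := by
    intro d
    have e := ((k₂.add k₃).sub hY).norm_sq.unique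
      ((hasFDerivAt_const (1 : ℝ) p).congr_of_eventuallyEq
      ((isOpen_regular.eventually_mem hreg).mono fun q hq => by
        change ‖unitVec q.2.1 + unitVec q.2.2.1 - mirror q.normal (unitVec q.2.1)‖ ^ 2 = 1
        rw [← mirror_add_mirror, add_sub_cancel_left, norm_mirror, norm_unitVec hq.2.1, one_pow]))
    have e' := DFunLike.congr_fun e d
    change (2 • ⟪unitVec p.2.1 + unitVec p.2.2.1 - Y p, N₂ d.2.1 + N₃ d.2.2.1 - Y' d⟫ : ℝ) = 0 at e'
    rw [hp₂, hp₃, hYp, ← hy, add_sub_cancel_left] at e'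
    simpa using e'
  refine ⟨_, ((k₁.add k₂).add (k₃.add k₄)).prodMk ((k₁.add k₂).prodMk (k₁.add hY)), ?_⟩
  rintro ⟨S, α, γ⟩
  obtain ⟨d₁, a₁, a₂, a₃⟩ := H₁ ⟪x₂, α⟫ ⟪mirror m x₂, γ⟫
  obtain ⟨d₄, b₁, b₂, b₃⟩ := H₄ ⟪x₃, S - α⟫ ⟪mirror m x₃, S - γ⟫
  obtain ⟨g, hg, hcg, hmg⟩ := exists_norm_eq_one_inner_eq_zero (x₂ + x₃) m
  have c₂ : ⟪x₂, α - d₁⟫ = 0 := by rw [inner_sub_right, a₂, sub_self]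
  have c₃ : ⟪x₃, S - α - d₄⟫ = 0 := by rw [inner_sub_right, b₂, sub_self]
  set D : Conf := (d₁, α - d₁, S - α - d₄, d₄, 0)
  set θ : E3 := Y' (0, 0, 0, 0, g)
  set η : E3 := γ - d₁ - Y' D
  have hθ₂ : ⟪mirror m x₂, θ⟫ = 0 := hY₂ _
  have hθ₃ : ⟪mirror m x₃, θ⟫ = 0 := by simpa using hY₃ (0, 0, 0, 0, g)
  have hη₂ : ⟪mirror m x₂, η⟫ = 0 := by
    rw [inner_sub_right, inner_sub_right, hY₂, a₃, sub_self, sub_zero]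
  have hη₃ : ⟪mirror m x₃, η⟫ = 0 := by
    have h := hY₃ D
    change ⟪mirror m x₃, N₂ (α - d₁) + N₃ (S - α - d₄) - Y' D⟫ = 0 at h
    rw [hN₂' _ c₂, hN₃' _ c₃] at h
    have e : η = (α - d₁ + (S - α - d₄) - Y' D) - ((S - γ) - d₄) := by
      simp only [η]; abel
    rw [e, inner_sub_right, h, inner_sub_right, b₃, sub_self, sub_zero]
  have hθ : θ = -((2 * ⟪m, x₂⟫) • g + (2 * ⟪g, x₂⟫) • m) := by
    have hcurve : HasDerivAt (fun τ : ℝ => p + τ • ((0, 0, 0, 0, g) : Conf)) (0, 0, 0, 0, g) 0 := by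
      simpa using ((hasDerivAt_id (0 : ℝ)).smul_const ((0, 0, 0, 0, g) : Conf)).const_add p
    have hY0 : HasFDerivAt Y Y' (p + (0 : ℝ) • ((0, 0, 0, 0, g) : Conf)) := by
      rwa [zero_smul, add_zero]
    refine (hY0.comp_hasDerivAt (0 : ℝ) hcurve).unique
      ((hasDerivAt_mirror hm hmg).congr_of_eventuallyEq (Eventually.of_forall fun τ => ?_))
    have e₂ : unitVec (p + τ • ((0, 0, 0, 0, g) : Conf)).2.1 = x₂ := by
      change unitVec (x₂ + τ • (0 : E3)) = x₂
      rw [smul_zero, add_zero, unitVec_of_norm_eq_one h₂]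
    have e₃ : unitVec (p + τ • ((0, 0, 0, 0, g) : Conf)).2.2.1 = x₃ := by
      change unitVec (x₃ + τ • (0 : E3)) = x₃
      rw [smul_zero, add_zero, unitVec_of_norm_eq_one h₃]
    change mirror (perpPart (unitVec _ + unitVec _) (m + τ • g)) (unitVec _) = _
    rw [e₂, e₃, perpPart, inner_add_right, inner_smul_right, hcm, hcg, mul_zero, add_zero, zero_div,
      zero_smul, sub_zero]
  have hθ0 : θ ≠ 0 := by
    intro h0
    have h := congrArg (fun y => ⟪g, y⟫) (hθ.symm.trans h0)
    simp only [inner_neg_right, inner_add_right, inner_smul_right, real_inner_self_eq_norm_sq, hg,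
      real_inner_comm m g, hmg, inner_zero_right] at h
    exact ht (by linarith)
  have hηθ : η = (⟪θ, η⟫ / ⟪θ, θ⟫) • θ := by
    refine sub_eq_zero.1 (eq_zero_of_inner_eq_zero hθ0 hc (c := mirror m x₃ - mirror m x₂)
      ?_ ?_ ?_ ?_ ?_ ?_ ?_)
    · intro h
      have h' := congrArg (fun y => ⟪m, y⟫) h
      simp only [inner_sub_right, inner_mirror, inner_zero_right] at h'
      rw [real_inner_comm, inner_add_right] at hcm
      exact ht (by linarith)
    · rw [← hy, real_inner_comm, inner_add_left, hθ₂, hθ₃, add_zero]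
    · rw [real_inner_comm, inner_sub_left, hθ₂, hθ₃, sub_zero]
    · rw [← hy, inner_sub_right, inner_add_left, inner_add_left, real_inner_self_eq_norm_sq,
        real_inner_self_eq_norm_sq, norm_mirror, norm_mirror, h₂, h₃,
        real_inner_comm (mirror m x₂)]
      ring
    · rw [real_inner_comm]; exact inner_perpPart θ η
    · rw [real_inner_comm, ← hy, inner_sub_right, inner_smul_right, inner_add_left, inner_add_left,
        hθ₂, hθ₃, hη₂, hη₃]
      ring
    · rw [real_inner_comm, inner_sub_right, inner_smul_right, inner_sub_left, inner_sub_left,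
        hθ₂, hθ₃, hη₂, hη₃]
      ring
  set r := ⟪θ, η⟫ / ⟪θ, θ⟫
  refine ⟨D + r • ((0, 0, 0, 0, g) : Conf), ?_⟩
  have eY : Y' (D + r • ((0, 0, 0, 0, g) : Conf)) = γ - d₁ := by
    rw [map_add, map_smul]
    change Y' D + r • θ = _
    rw [← hηθ]
    simp only [η]; abel
  have eD : D + r • ((0, 0, 0, 0, g) : Conf) = (d₁, α - d₁, S - α - d₄, d₄, r • g) := by
    simp [D]
  rw [eD] at eY ⊢
  change (N₁ d₁ + N₂ (α - d₁) + (N₃ (S - α - d₄) + N₄ d₄), N₁ d₁ + N₂ (α - d₁), N₁ d₁ + Y' _) = _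
  rw [eY, hN₁' _ a₁, hN₂' _ c₂, hN₃' _ c₃, hN₄' _ b₁]
  simp

end Conf

end Submersion

/-- `SumRel v` holds almost everywhere near `q`. -/
def LocRel (v : ℕ → E3 → ℂ) (q : E3 × E3 × E3) : Prop :=
  ∃ U ∈ nhds q, ∀ᵐ r : E3 × E3 × E3, r ∈ U → SumRel v r

section Base

lemma norm_half_smul_add_eq_one {z k m : E3} {s t : ℝ} (hk : ‖k‖ = 1) (hm : ‖m‖ = 1)
    (hzk : ⟪z, k⟫ = 0) (hzm : ⟪z, m⟫ = 0) (hkm : ⟪k, m⟫ = 0)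
    (h : ‖z‖ ^ 2 / 4 + s ^ 2 + t ^ 2 = 1) : ‖(1 / 2 : ℝ) • z + s • k + t • m‖ = 1 := by
  refine (pow_left_inj₀ (norm_nonneg _) zero_le_one two_ne_zero).1 ?_
  rw [← real_inner_self_eq_norm_sq]
  simp only [inner_add_left, inner_add_right, real_inner_smul_left, inner_smul_right, hzk, hzm, hkm,
    real_inner_comm z k, real_inner_comm z m, real_inner_comm k m, real_inner_self_eq_norm_sq, hk,
    hm]
  linarith

lemma mirror_half_smul_add {z k m : E3} {s t : ℝ} (hm : ‖m‖ = 1)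
    (hzm : ⟪z, m⟫ = 0) (hkm : ⟪k, m⟫ = 0) :
    mirror m ((1 / 2 : ℝ) • z + s • k + t • m) = (1 / 2 : ℝ) • z + s • k - t • m := by
  simp only [mirror, inner_add_right, inner_smul_right, real_inner_comm z m, real_inner_comm k m,
    hzm, hkm, real_inner_self_eq_norm_sq, hm]
  module

lemma exists_locRel {v : ℕ → E3 → ℂ} (hae : ∀ᵐ p : Conf, p ∈ Conf.regular → SumRel v p.sums)
    {z z' : E3} (hz : z ≠ 0) (hz' : z' ≠ 0) (hz2 : ‖z‖ < 2) (hz2' : ‖z'‖ < 2) :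
    ∃ w, LocRel v (z + z', z, w) := by
  obtain ⟨m, hm, hzm, hzm'⟩ := exists_norm_eq_one_inner_eq_zero z z'
  obtain ⟨k, hk, hzk, hmk⟩ := exists_norm_eq_one_inner_eq_zero z m
  have hpos : 0 < 1 - ‖z‖ ^ 2 / 4 := by nlinarith [norm_nonneg z]
  have hpos' : 0 < 1 - ‖z'‖ ^ 2 / 4 := by nlinarith [norm_nonneg z']
  obtain ⟨T, hT0, hT⟩ := exists_between (lt_min hpos hpos')
  obtain ⟨hT₁, hT₂⟩ := lt_min_iff.1 hT
  set t := √T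
  have ht : t ≠ 0 := (Real.sqrt_pos.2 hT0).ne'
  have ht2 : t ^ 2 = T := Real.sq_sqrt hT0.le
  set s := √(1 - ‖z‖ ^ 2 / 4 - T)
  have hs : s ≠ 0 := (Real.sqrt_pos.2 (by linarith)).ne'
  have hs2 : s ^ 2 = 1 - ‖z‖ ^ 2 / 4 - T := Real.sq_sqrt (by linarith)
  set s' := √(1 - ‖z'‖ ^ 2 / 4 - T)
  have hs' : s' ≠ 0 := (Real.sqrt_pos.2 (by linarith)).ne'
  have hs2' : s' ^ 2 = 1 - ‖z'‖ ^ 2 / 4 - T := Real.sq_sqrt (by linarith)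
  obtain ⟨k', hk', hzk', hmk', hc⟩ : ∃ k' : E3, ‖k'‖ = 1 ∧ ⟪z', k'⟫ = 0 ∧ ⟪m, k'⟫ = 0 ∧
      (1 / 2 : ℝ) • z + s • k + ((1 / 2 : ℝ) • z' + s' • k') ≠ 0 := by
    obtain ⟨k', hk', hzk', hmk'⟩ := exists_norm_eq_one_inner_eq_zero z' m
    by_cases h : (1 / 2 : ℝ) • z + s • k + ((1 / 2 : ℝ) • z' + s' • k') = 0
    · refine ⟨-k', by rwa [norm_neg], by rw [inner_neg_right, hzk', neg_zero],
        by rw [inner_neg_right, hmk', neg_zero], fun h' => ?_⟩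
      have h₂ : (2 * s') • k' = 0 := by
        rw [← sub_eq_zero.2 (h.trans h'.symm)]
        module
      rw [smul_eq_zero] at h₂
      rcases h₂ with h₂ | h₂
      · exact hs' (by linarith)
      · simp [h₂] at hk'
    · exact ⟨k', hk', hzk', hmk', h⟩
  have hkm : ⟪k, m⟫ = 0 := by rw [real_inner_comm, hmk]
  have hkm' : ⟪k', m⟫ = 0 := by rw [real_inner_comm, hmk']
  set x₁ := (1 / 2 : ℝ) • z - s • k - t • m with hx₁
  set x₂ := (1 / 2 : ℝ) • z + s • k + t • m with hx₂
  set x₃ := (1 / 2 : ℝ) • z' + s' • k' + (-t) • m with hx₃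
  set x₄ := (1 / 2 : ℝ) • z' - s' • k' - (-t) • m with hx₄
  have h₁ : ‖x₁‖ = 1 := by
    rw [hx₁, sub_eq_add_neg, sub_eq_add_neg, ← neg_smul, ← neg_smul]
    exact norm_half_smul_add_eq_one hk hm hzk hzm hkm (by linarith [neg_sq s, neg_sq t])
  have h₂ : ‖x₂‖ = 1 := norm_half_smul_add_eq_one hk hm hzk hzm hkm (by linarith)
  have h₃ : ‖x₃‖ = 1 :=
    norm_half_smul_add_eq_one hk' hm hzk' hzm' hkm' (by linarith [neg_sq t])
  have h₄ : ‖x₄‖ = 1 := by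
    rw [hx₄, sub_eq_add_neg, sub_eq_add_neg, ← neg_smul, ← neg_smul]
    exact norm_half_smul_add_eq_one hk' hm hzk' hzm' hkm'
      (by linarith [neg_sq s', neg_sq (-t), neg_sq t])
  have hx₂₃ : x₂ + x₃ = (1 / 2 : ℝ) • z + s • k + ((1 / 2 : ℝ) • z' + s' • k') := by
    rw [hx₂, hx₃]; module
  have hcm : ⟪x₂ + x₃, m⟫ = 0 := by
    rw [hx₂₃]
    simp only [inner_add_left, real_inner_smul_left, hzm, hzm', hkm, hkm']
    ring
  have hc0 : x₂ + x₃ ≠ 0 := by rwa [hx₂₃]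
  have hmx : ⟪m, x₂⟫ ≠ 0 := by
    rw [hx₂]
    simpa only [inner_add_right, inner_smul_right, real_inner_comm z m, hzm, hmk,
      real_inner_self_eq_norm_sq, hm, mul_zero, zero_add, one_pow, mul_one] using ht
  obtain ⟨L, hL, hLs⟩ := Conf.exists_surjective_hasFDerivAt_sums h₁ h₂ h₃ h₄ hm hcm hc0 hmx
    (by rw [hx₂, mirror_half_smul_add hm hzm hkm]
        exact exists_inner_eq hz hk hm hzk hzm hkm hs ht)
    (by rw [hx₃, mirror_half_smul_add hm hzm' hkm']
        exact exists_inner_eq hz' hk' hm hzk' hzm' hkm' hs' (neg_ne_zero.2 ht))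
  set p : Conf := (x₁, x₂, x₃, x₄, m) with hp
  have hreg : p ∈ Conf.regular := Conf.mem_regular_of_base h₂ h₃ hm hcm hc0
  have hcd := Conf.contDiffAt_sums hreg (norm_ne_zero_iff.1 (h₁.trans_ne one_ne_zero))
    (norm_ne_zero_iff.1 (h₄.trans_ne one_ne_zero))
  have hd : ∀ᶠ q in nhds p, DifferentiableAt ℝ Conf.sums q :=
    (hcd.eventually (by simp)).mono fun q hq => hq.differentiableAt one_ne_zero
  obtain ⟨V, hV, hVae⟩ := exists_nhds_ae_of_submersion volume volume
    (hcd.hasStrictFDerivAt' hL one_ne_zero) hd hLs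
    (Conf.isOpen_regular.mem_nhds hreg) hae
  refine ⟨p.flipped, V, ?_, hVae⟩
  have e : p.sums = (z + z', z, p.flipped) := by
    have e₁ : unitVec p.1 + unitVec p.2.1 = z := by
      change unitVec x₁ + unitVec x₂ = z
      rw [unitVec_of_norm_eq_one h₁, unitVec_of_norm_eq_one h₂, hx₁, hx₂]
      module
    have e₂ : unitVec p.2.2.1 + unitVec p.2.2.2.1 = z' := by
      change unitVec x₃ + unitVec x₄ = z'
      rw [unitVec_of_norm_eq_one h₃, unitVec_of_norm_eq_one h₄, hx₃, hx₄]
      module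
    rw [Conf.sums, Conf.total, e₁, e₂]
  rwa [← e]

end Base

section Lens

variable {v : ℕ → E3 → ℂ}

lemma LocRel.symm {s z w : E3} (h : LocRel v (s, z, w)) : LocRel v (s, w, z) := by
  obtain ⟨U, hU, hae⟩ := h
  let π₁ : E3 × E3 × E3 →L[ℝ] E3 := .fst ℝ E3 _
  let π₂ : E3 × E3 × E3 →L[ℝ] E3 := .comp (.fst ℝ E3 _) (.snd ℝ E3 _)
  let π₃ : E3 × E3 × E3 →L[ℝ] E3 := .comp (.snd ℝ E3 _) (.snd ℝ E3 _)
  let σ := π₁.prod (π₃.prod π₂)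
  refine ⟨σ ⁻¹' U, σ.continuous.continuousAt.preimage_mem_nhds hU, ?_⟩
  filter_upwards [ae_comp_of_surjective volume volume σ
    (fun q => ⟨(q.1, q.2.2, q.2.1), rfl⟩) hae] with q hq hqU
  exact (hq hqU).symm

lemma LocRel.trans {s z w y : E3} (h : LocRel v (s, z, w)) (h' : LocRel v (s, w, y)) :
    LocRel v (s, z, y) := by
  obtain ⟨U, hU, hae⟩ := h
  obtain ⟨U', hU', hae'⟩ := h'
  obtain ⟨A, hA, B, hB, hAB⟩ := mem_nhds_prod_iff.1 hU
  obtain ⟨B₁, hB₁, B₂, hB₂, hBB⟩ := mem_nhds_prod_iff.1 hB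
  obtain ⟨A', hA', B', hB', hAB'⟩ := mem_nhds_prod_iff.1 hU'
  obtain ⟨C₁, hC₁, C₂, hC₂, hCC⟩ := mem_nhds_prod_iff.1 hB'
  let π₁ : E3 × E3 × E3 × E3 →L[ℝ] E3 := .fst ℝ E3 _
  let τ : E3 × E3 × E3 × E3 →L[ℝ] E3 × E3 × E3 := .snd ℝ E3 _
  let π₂ : E3 × E3 × E3 × E3 →L[ℝ] E3 := .comp (.fst ℝ E3 _) τ
  let π₃ : E3 × E3 × E3 × E3 →L[ℝ] E3 := .comp (.comp (.fst ℝ E3 _) (.snd ℝ E3 _)) τ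
  let π₄ : E3 × E3 × E3 × E3 →L[ℝ] E3 := .comp (.comp (.snd ℝ E3 _) (.snd ℝ E3 _)) τ
  have h₁ := ae_comp_of_surjective volume volume (π₂.prod (π₃.prod π₁))
    (fun q => ⟨(q.2.2, q.1, q.2.1, 0), rfl⟩) hae
  have h₂ := ae_comp_of_surjective volume volume (π₂.prod (π₁.prod π₄))
    (fun q => ⟨(q.2.1, q.1, 0, q.2.2), rfl⟩) hae'
  have h₃ : ∀ᵐ x : E3, ∀ᵐ q : E3 × E3 × E3, ((q.1, q.2.1, x) ∈ U → SumRel v (q.1, q.2.1, x)) ∧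
      ((q.1, x, q.2.2) ∈ U' → SumRel v (q.1, x, q.2.2)) :=
    Measure.ae_ae_of_ae_prod (h₁.and h₂)
  obtain ⟨x, hx, hxB, hxC⟩ :=
    (Measure.dense_of_ae h₃).inter_nhds_nonempty (Filter.inter_mem hB₂ hC₁)
  refine ⟨(A ∩ A') ×ˢ B₁ ×ˢ C₂,
    prod_mem_nhds (Filter.inter_mem hA hA') (prod_mem_nhds hB₁ hC₂), ?_⟩
  filter_upwards [hx] with q hq ⟨hq₁, hq₂, hq₃⟩
  exact (hq.1 (hAB ⟨hq₁.1, hBB ⟨hq₂, hxB⟩⟩)).trans (hq.2 (hAB' ⟨hq₁.2, hCC ⟨hxC, hq₃⟩⟩))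

lemma LocRel.eventually {q : E3 × E3 × E3} (h : LocRel v q) : ∀ᶠ r in nhds q, LocRel v r := by
  obtain ⟨U, hU, hae⟩ := h
  filter_upwards [eventually_mem_nhds_iff.2 hU] with r hr
  exact ⟨U, hr, hae⟩

/-- The points `z` such that both `z` and `s - z` lie in `B(0,2)` and do not vanish. -/
def lens (s : E3) : Set E3 := {z | z ∈ ball (0 : E3) 2 ∧ s - z ∈ ball (0 : E3) 2 ∧ z ≠ 0 ∧ z ≠ s}

lemma exists_nhds_mem_ball {s z : E3} (hz : z ∈ ball (0 : E3) 2)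
    (hsz : s - z ∈ ball (0 : E3) 2) :
    ∃ U ∈ nhds z, ∀ y ∈ U, y ∈ ball (0 : E3) 2 ∧ s - y ∈ ball (0 : E3) 2 :=
  ⟨_, Filter.inter_mem (isOpen_ball.mem_nhds hz)
    (ContinuousAt.preimage_mem_nhds (f := fun y => s - y) (by fun_prop) (isOpen_ball.mem_nhds hsz)),
    fun _ hy => hy⟩

lemma convex_ball_sub_mem_ball (s : E3) :
    Convex ℝ {z : E3 | z ∈ ball (0 : E3) 2 ∧ s - z ∈ ball (0 : E3) 2} := by
  have h : {z : E3 | z ∈ ball (0 : E3) 2 ∧ s - z ∈ ball (0 : E3) 2} = ball 0 2 ∩ ball s 2 := by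
    ext z
    simp [mem_ball, dist_eq_norm, norm_sub_rev s z]
  rw [h]
  exact (convex_ball _ _).inter (convex_ball _ _)

lemma locRel_of_segment_subset
    (H : ∀ s, ∀ z ∈ lens s, ∃ w, LocRel v (s, z, w)) {s z w : E3} (h : segment ℝ z w ⊆ lens s) :
    LocRel v (s, z, w) := by
  refine (convex_segment z w).isPreconnected.induction₂ (fun a b => LocRel v (s, a, b))
    (fun x hx => ?_) (fun _ _ _ _ _ _ => LocRel.trans) (fun _ _ _ _ => LocRel.symm)
    (left_mem_segment ℝ z w) (right_mem_segment ℝ z w)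
  obtain ⟨y, hy⟩ := H s x (h hx)
  have hxx := hy.trans hy.symm
  refine Filter.Eventually.filter_mono nhdsWithin_le_nhds ?_
  have hc : Tendsto (fun b : E3 => (s, x, b)) (nhds x) (nhds (s, x, x)) :=
    Continuous.tendsto (by fun_prop) x
  exact hc.eventually hxx.eventually

lemma mem_affineSpan_pair_of_mem_segment {x y z : E3} (hx : x ∈ segment ℝ z y) (hxz : x ≠ z) :
    y ∈ line[ℝ, z, x] := by
  rw [segment_eq_image_lineMap] at hx
  obtain ⟨t, -, rfl⟩ := hx
  have ht : t ≠ 0 := by rintro rfl; simp at hxz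
  have := AffineMap.lineMap_mem_affineSpan_pair t⁻¹ z (AffineMap.lineMap z y t)
  rwa [AffineMap.lineMap_lineMap_right, inv_mul_cancel₀ ht, AffineMap.lineMap_apply_one] at this

lemma ae_notMem_affineSpan_pair (a b : E3) : ∀ᵐ y : E3, y ∉ line[ℝ, a, b] := by
  refine measure_eq_zero_iff_ae_notMem.1 (Measure.addHaar_affineSubspace volume _ fun h => ?_)
  have h₁ := collinear_iff_finrank_le_one.1 (collinear_pair ℝ a b)
  rw [← direction_affineSpan, h, AffineSubspace.direction_top, finrank_top] at h₁
  simp at h₁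

lemma locRel_of_mem_lens (H : ∀ s, ∀ z ∈ lens s, ∃ w, LocRel v (s, z, w)) {s z w : E3}
    (hz : z ∈ lens s) (hw : w ∈ lens s) : LocRel v (s, z, w) := by
  obtain ⟨U, hU, hUs⟩ := exists_nhds_mem_ball hz.1 hz.2.1
  obtain ⟨y, ⟨h₁, h₂, h₃, h₄⟩, hyU⟩ := (Measure.dense_of_ae
    ((ae_notMem_affineSpan_pair z 0).and ((ae_notMem_affineSpan_pair z s).and
      ((ae_notMem_affineSpan_pair w 0).and (ae_notMem_affineSpan_pair w s))))).inter_nhds_nonempty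
    hU
  have key : ∀ a ∈ lens s, y ∉ line[ℝ, a, 0] → y ∉ line[ℝ, a, s] → LocRel v (s, a, y) := by
    intro a ha h0 hs
    refine locRel_of_segment_subset H fun x hx => ?_
    obtain ⟨hx₁, hx₂⟩ := (convex_ball_sub_mem_ball s).segment_subset ⟨ha.1, ha.2.1⟩ (hUs y hyU) hx
    refine ⟨hx₁, hx₂, ?_, ?_⟩
    · rintro rfl
      exact h0 (mem_affineSpan_pair_of_mem_segment hx ha.2.2.1.symm)
    · rintro rfl
      exact hs (mem_affineSpan_pair_of_mem_segment hx ha.2.2.2.symm)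
  exact (key z hz h₁ h₂).trans (key w hw h₃ h₄).symm

lemma ae_sumRel (H : ∀ s, ∀ z ∈ lens s, ∃ w, LocRel v (s, z, w)) :
    ∀ᵐ q : E3 × E3 × E3, q.2.1 ∈ lens q.1 → q.2.2 ∈ lens q.1 → SumRel v q := by
  refine measure_null_of_locally_null _ fun q hq => ?_
  simp only [Set.mem_compl_iff, Set.mem_ofPred_eq, Classical.not_imp] at hq
  obtain ⟨U, hU, hae⟩ := locRel_of_mem_lens H hq.1 hq.2.1
  refine ⟨_, Filter.inter_mem self_mem_nhdsWithin (mem_nhdsWithin_of_mem_nhds hU),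
    measure_mono_null (fun r hr => ?_) hae⟩
  obtain ⟨hr₁, hr₂⟩ := hr
  simp only [Set.mem_compl_iff, Set.mem_ofPred_eq, Classical.not_imp] at hr₁ ⊢
  exact ⟨hr₂, hr₁.2.2⟩

end Lens

section Conclusion

/-- For `‖s‖ < 4` and `‖ζ‖ < 1`, a point `w` such that both `w` and `s - w` lie in `B(0,2)`. -/
def lensPoint (ζ s : E3) : E3 := (1 / 2 : ℝ) • s + (1 - ‖s‖ ^ 2 / 16) • ζ

lemma lensPoint_mem_ball {ζ s : E3} (hζ : ‖ζ‖ < 1) (hs : ‖s‖ < 4) :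
    lensPoint ζ s ∈ ball (0 : E3) 2 ∧ s - lensPoint ζ s ∈ ball (0 : E3) 2 := by
  have hρ : 0 < 1 - ‖s‖ ^ 2 / 16 := by nlinarith [norm_nonneg s]
  have h₁ : ‖(1 / 2 : ℝ) • s‖ = ‖s‖ / 2 := by rw [norm_smul]; norm_num; ring
  have h₂ : ‖(1 - ‖s‖ ^ 2 / 16) • ζ‖ < 1 - ‖s‖ ^ 2 / 16 := by
    rw [norm_smul, Real.norm_of_nonneg hρ.le]
    nlinarith
  have h₃ : ‖s‖ / 2 + (1 - ‖s‖ ^ 2 / 16) ≤ 2 := by nlinarith [sq_nonneg (1 - ‖s‖ / 4)]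
  constructor
  · rw [mem_ball_zero_iff, lensPoint]
    linarith [norm_add_le ((1 / 2 : ℝ) • s) ((1 - ‖s‖ ^ 2 / 16) • ζ)]
  · have e : s - lensPoint ζ s = (1 / 2 : ℝ) • s - (1 - ‖s‖ ^ 2 / 16) • ζ := by
      rw [lensPoint]; module
    rw [mem_ball_zero_iff, e]
    linarith [norm_sub_le ((1 / 2 : ℝ) • s) ((1 - ‖s‖ ^ 2 / 16) • ζ)]

lemma exists_ae_sumRel_lensPoint {v : ℕ → E3 → ℂ}
    (h : ∀ᵐ q : E3 × E3 × E3, q.2.1 ∈ lens q.1 → q.2.2 ∈ lens q.1 → SumRel v q) :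
    ∃ ζ : E3, ∀ᵐ p : E3 × E3, p ∈ ball (0 : E3) 2 ×ˢ ball (0 : E3) 2 →
      SumRel v (p.1 + p.2, p.1, lensPoint ζ (p.1 + p.2)) := by
  let π₁ : E3 × E3 × E3 →L[ℝ] E3 := .fst ℝ E3 _
  let π₂ : E3 × E3 × E3 →L[ℝ] E3 := .comp (.fst ℝ E3 _) (.snd ℝ E3 _)
  let π₃ : E3 × E3 × E3 →L[ℝ] E3 := .comp (.snd ℝ E3 _) (.snd ℝ E3 _)
  have hne : ∀ᵐ x : E3, x ≠ 0 := by simp [ae_iff]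
  have h' : ∀ᵐ q : E3 × E3 × E3, q ∈ {q : E3 × E3 × E3 | ‖q.1‖ < 4} →
      q.2.1 ∈ ball (0 : E3) 2 → q.1 - q.2.1 ∈ ball (0 : E3) 2 → q.2.2 ∈ ball (0 : E3) 2 →
        q.1 - q.2.2 ∈ ball (0 : E3) 2 → SumRel v q := by
    filter_upwards [h,
      ae_comp_of_surjective volume volume π₂ (fun x => ⟨(0, x, 0), rfl⟩) hne,
      ae_comp_of_surjective volume volume π₃ (fun x => ⟨(0, 0, x), rfl⟩) hne,
      ae_comp_of_surjective volume volume (π₂ - π₁) (fun x => ⟨(0, x, 0), sub_zero x⟩) hne,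
      ae_comp_of_surjective volume volume (π₃ - π₁) (fun x => ⟨(0, 0, x), sub_zero x⟩) hne]
      with q hq h₂ h₃ h₄ h₅ _ a b c d
    exact hq ⟨a, b, h₂, sub_ne_zero.1 h₄⟩ ⟨c, d, h₃, sub_ne_zero.1 h₅⟩
  let g : E3 × E3 × E3 → E3 × E3 × E3 := fun q =>
    (q.1, q.2.1, (1 - ‖q.1‖ ^ 2 / 16)⁻¹ • (q.2.2 - (1 / 2 : ℝ) • q.1))
  have hρ : ∀ s : E3, ‖s‖ < 4 → 1 - ‖s‖ ^ 2 / 16 ≠ 0 := fun s hs => by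
    nlinarith [norm_nonneg s]
  have hg : DifferentiableOn ℝ g {q : E3 × E3 × E3 | ‖q.1‖ < 4} := by
    intro q hq
    have h₁ : DifferentiableAt ℝ (fun q : E3 × E3 × E3 => 1 - ‖q.1‖ ^ 2 / 16) q := by
      have h₀ : DifferentiableAt ℝ (fun q : E3 × E3 × E3 => ‖q.1‖ ^ 2) q :=
        differentiableAt_fst.norm_sq ℝ
      simpa only [div_eq_mul_inv] using (h₀.mul_const (16 : ℝ)⁻¹).const_sub 1
    have h₂ : DifferentiableAt ℝ (fun q : E3 × E3 × E3 => q.2.2 - (1 / 2 : ℝ) • q.1) q := by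
      fun_prop
    exact (differentiableAt_fst.prodMk (DifferentiableAt.prodMk (by fun_prop)
      ((h₁.inv (hρ _ hq)).smul h₂))).differentiableWithinAt
  have hT := ae_comp_of_leftInverse volume volume rfl
    (T := fun q : E3 × E3 × E3 => (q.1, q.2.1, lensPoint q.2.2 q.1))
    (D := {q | ‖q.1‖ < 4}) (fun q hq => hq) hg (fun q hq => by
      simp only [g, lensPoint, add_sub_cancel_left]
      rw [inv_smul_smul₀ (hρ _ hq)]) h'
  have hF : ∀ᵐ ζ : E3, ∀ᵐ p : E3 × E3, ‖p.1‖ < 4 → p.2 ∈ ball (0 : E3) 2 →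
      p.1 - p.2 ∈ ball (0 : E3) 2 → lensPoint ζ p.1 ∈ ball (0 : E3) 2 →
        p.1 - lensPoint ζ p.1 ∈ ball (0 : E3) 2 → SumRel v (p.1, p.2, lensPoint ζ p.1) :=
    Measure.ae_ae_of_ae_prod (ae_comp_of_surjective volume volume (π₂.prod (π₃.prod π₁))
      (fun q => ⟨(q.2.2, q.1, q.2.1), rfl⟩) hT)
  obtain ⟨ζ, hζ, hζ1⟩ := (Measure.dense_of_ae hF).inter_nhds_nonempty
    (ball_mem_nhds (0 : E3) one_pos)
  rw [mem_ball_zero_iff] at hζ1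
  refine ⟨ζ, ?_⟩
  let σ₁ : E3 × E3 →L[ℝ] E3 := .fst ℝ E3 E3
  let σ₂ : E3 × E3 →L[ℝ] E3 := .snd ℝ E3 E3
  filter_upwards [ae_comp_of_surjective volume volume ((σ₁ + σ₂).prod σ₁)
    (fun q => ⟨(q.2, q.1 - q.2), Prod.ext (add_sub_cancel q.2 q.1) rfl⟩) hζ] with p hp ⟨hp₁, hp₂⟩
  have hs : ‖p.1 + p.2‖ < 4 := by
    rw [mem_ball_zero_iff] at hp₁ hp₂
    linarith [norm_add_le p.1 p.2]
  obtain ⟨hw₁, hw₂⟩ := lensPoint_mem_ball hζ1 hs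
  exact hp hs hp₁ (by change p.1 + p.2 - p.1 ∈ _; rwa [add_sub_cancel_left]) hw₁ hw₂

lemma exists_ae_tendsto_sub {u v : ℕ → E3 → ℂ} (hu : ∀ n x, ‖u n x‖ = 1) (hv : ∀ n x, ‖v n x‖ = 1)
    (hg : ∀ᵐ q : E3 × E3, Good u v (unitVec q.1) (unitVec q.2)) :
    ∃ ζ : E3, ∀ᵐ p : E3 × E3, p ∈ ball (0 : E3) 2 ×ˢ ball (0 : E3) 2 →
      Tendsto (fun n => v n p.1 * v n p.2
        - v n (lensPoint ζ (p.1 + p.2)) * v n (p.1 + p.2 - lensPoint ζ (p.1 + p.2)))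
        atTop (nhds 0) := by
  have hae := ae_sumRel_sums hu hv hg
  have H : ∀ s, ∀ z ∈ lens s, ∃ w, LocRel v (s, z, w) := fun s z hz => by
    obtain ⟨w, hw⟩ := exists_locRel hae hz.2.2.1 (sub_ne_zero.2 hz.2.2.2.symm)
      (mem_ball_zero_iff.1 hz.1) (mem_ball_zero_iff.1 hz.2.1)
    rw [add_sub_cancel] at hw
    exact ⟨w, hw⟩
  obtain ⟨ζ, hζ⟩ := exists_ae_sumRel_lensPoint (ae_sumRel H)
  refine ⟨ζ, hζ.mono fun p hp hpB => ?_⟩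
  simpa only [SumRel, add_sub_cancel_left] using hp hpB

/-- The unimodular function with phase `φ`. -/
def phase (φ : E3 → ℝ) (x : E3) : ℂ := Complex.exp (Complex.I * (φ x : ℂ))

lemma norm_phase (φ : E3 → ℝ) (x : E3) : ‖phase φ x‖ = 1 := by
  rw [phase, mul_comm, Complex.norm_exp_ofReal_mul_I]

lemma phase_mul_phase (φ : E3 → ℝ) (x y : E3) :
    phase φ x * phase φ y = Complex.exp (Complex.I * ((φ x + φ y : ℝ) : ℂ)) := by
  rw [phase, phase, ← Complex.exp_add, Complex.ofReal_add, mul_add]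

lemma measurable_phase {φ : E3 → ℝ} (hφ : Measurable φ) : Measurable (phase φ) := by
  unfold phase; fun_prop

lemma ae_good_of_close {G : ℕ → Set (E3 × E3)} {φ ψ : ℕ → E3 → ℝ}
    (hG : ∀ n, (sphMeasure.prod sphMeasure) ((sph ×ˢ sph) \ G n) < ENNReal.ofReal ((1 / 2) ^ n))
    (hc : ∀ n, ∀ p ∈ G n, ‖Complex.exp (Complex.I * ((φ n p.1 + φ n p.2 : ℝ) : ℂ))
      - Complex.exp (Complex.I * ((ψ n (p.1 + p.2) : ℝ) : ℂ))‖ < (1 / 2) ^ n) :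
    ∀ᵐ q : E3 × E3, Good (fun n => phase (φ n)) (fun n => phase (ψ n))
      (unitVec q.1) (unitVec q.2) := by
  have hsum : ∑' n, (sphMeasure.prod sphMeasure) ((sph ×ˢ sph) \ G n) ≠ ∞ := by
    refine ne_top_of_le_ne_top ?_ (ENNReal.tsum_le_tsum fun n => (hG n).le)
    rw [← ENNReal.ofReal_tsum_of_nonneg (fun n => by positivity) summable_geometric_two]
    exact ENNReal.ofReal_ne_top
  have hR := ae_eventually_notMem hsum
  have hne : ∀ᵐ x : E3, x ≠ 0 := by simp [ae_iff]
  have hU := QuasiMeasurePreserving.prodMap quasiMeasurePreserving_unitVec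
    quasiMeasurePreserving_unitVec
  filter_upwards [hU.ae hR,
    ae_comp_of_surjective volume volume (ContinuousLinearMap.fst ℝ E3 E3)
      (fun x => ⟨(x, 0), rfl⟩) hne,
    ae_comp_of_surjective volume volume (ContinuousLinearMap.snd ℝ E3 E3)
      (fun x => ⟨(0, x), rfl⟩) hne] with q hq h₁ h₂
  have hmem : (unitVec q.1, unitVec q.2) ∈ sph ×ˢ sph :=
    ⟨mem_sphere_zero_iff_norm.2 (norm_unitVec h₁), mem_sphere_zero_iff_norm.2 (norm_unitVec h₂)⟩
  refine squeeze_zero_norm' (hq.mono fun n hn => ?_)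
    (tendsto_pow_atTop_nhds_zero_of_lt_one (r := (1 / 2 : ℝ)) (by norm_num) (by norm_num))
  rw [phase_mul_phase]
  exact (hc n _ (by_contra fun hG' => hn ⟨hmem, hG'⟩)).le

end Conclusion

/-- **Quantitative transfer of the approximate functional equation from `S²` to `B(0,2)`.**
For any `ε > 0` there exists `δ > 0` with the following property.  Let `𝒢 ⊂ S²×S²` be a
measurable set with `(σ×σ)((S²×S²)∖𝒢) < δ`, and let `φ : S² → ℝ`, `ψ : B(0,2) → ℝ` be
measurable functions with `|e^{i[φ(x)+φ(x')]} - e^{iψ(x+x')}| < δ` for all `(x,x') ∈ 𝒢`.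
Then there exist a measurable set `ℰ ⊂ B(0,2)×B(0,2)` with Lebesgue measure `|ℰ| < ε` and a
measurable `h : B(0,4) → ℂ` such that
`|e^{i[ψ(z)+ψ(z')]} - h(z+z')| < ε` for all `(z,z') ∈ (B(0,2)×B(0,2)) ∖ ℰ`. -/
theorem quantitative_approximate_character (ε : ℝ) (hε : 0 < ε) :
    ∃ δ : ℝ, 0 < δ ∧
      ∀ G : Set (E3 × E3), MeasurableSet G → G ⊆ sph ×ˢ sph →
        (sphMeasure.prod sphMeasure) ((sph ×ˢ sph) \ G) < ENNReal.ofReal δ →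
      ∀ φ ψ : E3 → ℝ, Measurable φ → Measurable ψ →
        (∀ p ∈ G, ‖Complex.exp (Complex.I * ((φ p.1 + φ p.2 : ℝ) : ℂ))
            - Complex.exp (Complex.I * ((ψ (p.1 + p.2) : ℝ) : ℂ))‖ < δ) →
        ∃ E : Set (E3 × E3), MeasurableSet E ∧ E ⊆ ball (0 : E3) 2 ×ˢ ball (0 : E3) 2 ∧
          (volume : Measure (E3 × E3)) E < ENNReal.ofReal ε ∧
          ∃ h : E3 → ℂ, Measurable h ∧
            ∀ p ∈ (ball (0 : E3) 2 ×ˢ ball (0 : E3) 2) \ E,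
              ‖Complex.exp (Complex.I * ((ψ p.1 + ψ p.2 : ℝ) : ℂ)) - h (p.1 + p.2)‖ < ε := by
  by_contra hcon
  push Not at hcon
  have hcon' := fun n : ℕ => hcon ((1 / 2) ^ n) (by positivity)
  choose G _ _ hG φ ψ _ hψ hclose hbad using hcon'
  obtain ⟨ζ, hζ⟩ := exists_ae_tendsto_sub (fun n => norm_phase (φ n)) (fun n => norm_phase (ψ n))
    (ae_good_of_close hG hclose)
  set B : Set (E3 × E3) := ball (0 : E3) 2 ×ˢ ball (0 : E3) 2
  have hB : MeasurableSet B := measurableSet_ball.prod measurableSet_ball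
  have hBfin : IsFiniteMeasure ((volume : Measure (E3 × E3)).restrict B) := by
    refine ⟨?_⟩
    rw [Measure.restrict_apply_univ, Measure.volume_eq_prod, Measure.prod_prod]
    exact ENNReal.mul_lt_top measure_ball_lt_top measure_ball_lt_top
  have hlens : Measurable (lensPoint ζ) := by unfold lensPoint; fun_prop
  let h (n : ℕ) (s : E3) : ℂ := phase (ψ n) (lensPoint ζ s) * phase (ψ n) (s - lensPoint ζ s)
  have hh : ∀ n, Measurable (h n) := fun n =>
    ((measurable_phase (hψ n)).comp hlens).mul
      ((measurable_phase (hψ n)).comp (measurable_id.sub hlens))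
  let F (n : ℕ) (p : E3 × E3) : ℂ := phase (ψ n) p.1 * phase (ψ n) p.2 - h n (p.1 + p.2)
  have hF : ∀ n, Measurable (F n) := fun n =>
    (((measurable_phase (hψ n)).comp measurable_fst).mul
      ((measurable_phase (hψ n)).comp measurable_snd)).sub ((hh n).comp measurable_add)
  have hlim := tendstoInMeasure_of_tendsto_ae (μ := (volume : Measure (E3 × E3)).restrict B)
    (fun n => (hF n).aestronglyMeasurable) ((ae_restrict_iff' hB).2 hζ)
  obtain ⟨n, hn⟩ := ((tendstoInMeasure_iff_norm.1 hlim ε hε).eventually_lt_const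
    (ENNReal.ofReal_pos.2 hε)).exists
  have hS : MeasurableSet {p | ε ≤ ‖F n p‖} := measurableSet_le measurable_const (hF n).norm
  obtain ⟨p, ⟨hpB, hpS⟩, hp⟩ := hbad n (B ∩ {p | ε ≤ ‖F n p‖}) (hB.inter hS)
    Set.inter_subset_left (by
      rw [Set.inter_comm, ← Measure.restrict_apply hS]
      simpa only [sub_zero] using hn) (h n) (hh n)
  rw [← phase_mul_phase] at hp
  exact hpS ⟨hpB, hp⟩

end
end

section
/- Let D ⊂ ℝ^d be a bounded open ball. For any ε > 0 there exists δ > 0 with the following property: if ψ : D → ℝ and h : D+D → ℂ are measurable functions such that the Lebesgue measure of {(x,y) ∈ D×D : |e^{i[ψ(x)+ψ(y)]} − h(x+y)| > δ} is less than δ, then there exist ξ ∈ ℝ^d and c ∈ ℂ with |c| = 1 such that ‖e^{iψ(x)} − c e^{ix·ξ}‖_{L²(D, dx)} < ε. -/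
open MeasureTheory Metric
open scoped ENNReal RealInnerProductSpace

noncomputable section

open scoped ComplexConjugate

theorem norm_mul_conj_sub_pow_le {a : ℕ → ℂ} (ha : ∀ j, ‖a j‖ = 1) {g : ℂ} (hg : ‖g‖ = 1) (n : ℕ) :
    ‖a n * conj (a 0) - g ^ n‖ ≤ ∑ j ∈ Finset.range n, ‖a (j + 1) * conj (a j) - g‖ := by
  induction n with
  | zero => simp [Complex.mul_conj', ha]
  | succ n ih =>
    rw [Finset.sum_range_succ]
    have h1 : conj (a n) * a n = 1 := by simp [Complex.conj_mul', ha]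
    have h2 : a (n + 1) * conj (a 0) - g ^ (n + 1) =
        (a n * conj (a 0) - g ^ n) * g
          + (a (n + 1) * conj (a n) - g) * (a n * conj (a 0)) := by
      linear_combination (-a (n + 1) * conj (a 0)) * h1
    rw [h2]
    refine (norm_add_le _ _).trans ?_
    simpa [hg, ha] using ih

theorem norm_pow_sub_pow_le {a b : ℂ} (ha : ‖a‖ = 1) (hb : ‖b‖ = 1) (n : ℕ) :
    ‖a ^ n - b ^ n‖ ≤ n * ‖a - b‖ := by
  have h : conj a * a = 1 := by simp [Complex.conj_mul', ha]
  have h2 : ∀ j, a ^ (j + 1) * conj a ^ j = a := fun j => by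
    rw [pow_succ', mul_assoc, ← mul_pow, mul_comm a (conj a), h, one_pow, mul_one]
  simpa [ha, h2] using norm_mul_conj_sub_pow_le (a := fun j => a ^ j) (by simp [ha]) hb n

section
variable {E : Type*} [NormedAddCommGroup E]

/-- The error, at base point `x`, of approximating the multiplicative increment
`f (x + s) * conj (f x)` by `g s`; it is set to zero unless both `x` and `x + s` are in `D`. -/
def incrementError (D : Set E) (f g : E → ℂ) (p : E × E) : ℝ≥0∞ :=
  {p : E × E | p.1 ∈ D ∧ p.1 + p.2 ∈ D}.indicator
    (fun p => ‖f (p.1 + p.2) * conj (f p.1) - g p.2‖ₑ) p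

theorem incrementError_le_indicator_add {f h : E → ℂ} (hf1 : ∀ x, ‖f x‖ = 1) {D : Set E} {δ : ℝ}
    {x y s : E} (hy : y ∈ D) (hys : y + s ∈ D) :
    incrementError D f (fun s => f (y + s) * conj (f y)) (x, s) ≤
      D.indicator (fun _ => 2 * ENNReal.ofReal δ) x +
      {p : E × E | p.1 ∈ D ∧ p.2 ∈ D ∧ δ < ‖f p.1 * f p.2 - h (p.1 + p.2)‖}.indicator
        (fun _ => 2) (x + s, y) +
      {p : E × E | p.1 ∈ D ∧ p.2 ∈ D ∧ δ < ‖f p.1 * f p.2 - h (p.1 + p.2)‖}.indicator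
        (fun _ => 2) (x, y + s) := by
  by_cases hx : x ∈ D ∧ x + s ∈ D
  swap
  · rw [incrementError, Set.indicator_of_notMem (by simpa using hx)]
    exact zero_le
  obtain ⟨hx, hxs⟩ := hx
  have hconj : ∀ z, conj (f z) * f z = 1 := fun z => by simp [Complex.conj_mul', hf1]
  have h1 : incrementError D f (fun s => f (y + s) * conj (f y)) (x, s) =
      ‖f (x + s) * f y - f x * f (y + s)‖ₑ := by
    rw [incrementError, Set.indicator_of_mem (by simp [hx, hxs])]
    have : f (x + s) * conj (f x) - f (y + s) * conj (f y) =
        (f (x + s) * f y - f x * f (y + s)) * (conj (f x) * conj (f y)) := by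
      linear_combination (-f (x + s) * conj (f x)) * hconj y + f (y + s) * conj (f y) * hconj x
    simp only [this, enorm_mul]
    simp [← ofReal_norm, hf1]
  have h2 : ‖f (x + s) * f y - f x * f (y + s)‖ₑ ≤ 2 := by
    rw [← ofReal_norm]
    refine ENNReal.ofReal_le_of_le_toReal ((norm_sub_le _ _).trans ?_)
    norm_num [hf1]
  rw [h1]
  by_cases hA : δ < ‖f (x + s) * f y - h (x + s + y)‖
  · rw [Set.indicator_of_mem (a := (x + s, y)) (by simp [hxs, hy, hA])]
    refine h2.trans ?_
    rw [add_right_comm]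
    exact le_add_self
  by_cases hB : δ < ‖f x * f (y + s) - h (x + (y + s))‖
  · rw [Set.indicator_of_mem (a := (x, y + s)) (by simp [hx, hys, hB])]
    exact h2.trans le_add_self
  rw [add_assoc, Set.indicator_of_mem hx]
  refine le_add_right ?_
  rw [two_mul, ← ofReal_norm]
  refine le_trans (ENNReal.ofReal_le_ofReal ?_) ENNReal.ofReal_add_le
  have h3 : x + (y + s) = x + s + y := by abel
  rw [h3] at hB
  have := norm_sub_le (f (x + s) * f y - h (x + s + y)) (f x * f (y + s) - h (x + s + y))
  rw [sub_sub_sub_cancel_right] at this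
  linarith

variable [MeasurableSpace E] [BorelSpace E] [SecondCountableTopology E]

theorem measurableSet_increment {D : Set E} (hD : MeasurableSet D) :
    MeasurableSet {p : E × E | p.1 ∈ D ∧ p.1 + p.2 ∈ D} :=
  (measurable_fst hD).inter ((measurable_fst.add measurable_snd) hD)

@[fun_prop]
theorem measurable_incrementError {D : Set E} (hD : MeasurableSet D)
    {f g : E → ℂ} (hf : Measurable f) (hg : Measurable g) :
    Measurable (incrementError D f g) := by
  refine Measurable.indicator ?_ (measurableSet_increment hD)
  have : Measurable (conj : ℂ → ℂ) := Complex.continuous_conj.measurable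
  fun_prop

/-- If `f x * f y` is close to a function of `x + y` on `D × D`, then the multiplicative increments
`f (x + s) * conj (f x)` are close to a function of `s`. -/
theorem exists_lintegral_incrementError_le
    {μ : Measure E} [SFinite μ] [μ.IsAddRightInvariant]
    {f h : E → ℂ} (hf : Measurable f) (hf1 : ∀ x, ‖f x‖ = 1)
    (hh : Measurable h) {D S Y : Set E} (hD : MeasurableSet D) (hS : MeasurableSet S)
    (hY : MeasurableSet Y) (hYD : Y ⊆ D) (hYS : ∀ y ∈ Y, ∀ s ∈ S, y + s ∈ D)
    (hY0 : μ Y ≠ 0) (hYtop : μ Y ≠ ∞) {δ : ℝ}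
    (hδ : (μ.prod μ)
      {p : E × E | p.1 ∈ D ∧ p.2 ∈ D ∧ δ < ‖f p.1 * f p.2 - h (p.1 + p.2)‖} ≤ ENNReal.ofReal δ) :
    ∃ g : E → ℂ, Measurable g ∧ (∀ s, ‖g s‖ = 1) ∧
      ∫⁻ s in S, ∫⁻ x, incrementError D f g (x, s) ∂μ ∂μ ≤
        (2 * μ D * μ Y + 4) * μ S / μ Y * ENNReal.ofReal δ := by
  set Z := {p : E × E | p.1 ∈ D ∧ p.2 ∈ D ∧ δ < ‖f p.1 * f p.2 - h (p.1 + p.2)‖} with hZdef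
  have hZ : MeasurableSet Z := by
    refine (measurable_fst hD).inter ((measurable_snd hD).inter ?_)
    have : Measurable fun p : E × E => ‖f p.1 * f p.2 - h (p.1 + p.2)‖ := by fun_prop
    exact measurableSet_lt measurable_const this
  have hconj : Measurable (conj : ℂ → ℂ) := Complex.continuous_conj.measurable
  have hmeas : Measurable fun q : (E × E) × E =>
      incrementError D f (fun s => f (q.1.1 + s) * conj (f q.1.1)) (q.2, q.1.2) := by
    refine Measurable.indicator (s := {q : (E × E) × E | q.2 ∈ D ∧ q.2 + q.1.2 ∈ D})
      (f := fun q => ‖f (q.2 + q.1.2) * conj (f q.2) - f (q.1.1 + q.1.2) * conj (f q.1.1)‖ₑ) ?_ ?_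
    · fun_prop
    · exact (measurable_snd hD).inter ((by fun_prop : Measurable
        fun q : (E × E) × E => q.2 + q.1.2) hD)
  have hmeas2 : Measurable fun q : E × E =>
      ∫⁻ x, incrementError D f (fun s => f (q.1 + s) * conj (f q.1)) (x, q.2) ∂μ :=
    hmeas.lintegral_prod_right'
  have hZ1 : Measurable (Z.indicator fun _ => (2 : ℝ≥0∞)) := measurable_const.indicator hZ
  have hZint : ∫⁻ y, ∫⁻ x, Z.indicator (fun _ => (2 : ℝ≥0∞)) (x, y) ∂μ ∂μ
      ≤ 2 * ENNReal.ofReal δ := by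
    rw [← lintegral_prod_symm' _ hZ1, lintegral_indicator_const hZ]
    gcongr
  have hs : ∀ s ∈ S, ∫⁻ y in Y, ∫⁻ x,
      incrementError D f (fun s => f (y + s) * conj (f y)) (x, s) ∂μ ∂μ ≤
        (2 * μ D * μ Y + 4) * ENNReal.ofReal δ := by
    intro s hs
    have hshift : ∀ y, ∫⁻ x, Z.indicator (fun _ => (2 : ℝ≥0∞)) (x + s, y) ∂μ =
        ∫⁻ x, Z.indicator (fun _ => (2 : ℝ≥0∞)) (x, y) ∂μ := fun y =>
      lintegral_add_right_eq_self (fun x => Z.indicator (fun _ => (2 : ℝ≥0∞)) (x, y)) s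
    calc _ ≤ ∫⁻ y in Y, (∫⁻ x, D.indicator (fun _ => 2 * ENNReal.ofReal δ) x ∂μ +
            ∫⁻ x, Z.indicator (fun _ => 2) (x, y) ∂μ +
            ∫⁻ x, Z.indicator (fun _ => 2) (x, y + s) ∂μ) ∂μ := by
          refine setLIntegral_mono' hY fun y hy => ?_
          rw [← hshift, ← lintegral_add_right, ← lintegral_add_right]
          · exact lintegral_mono fun x =>
              incrementError_le_indicator_add hf1 (hYD hy) (hYS y hy s hs)
          · exact hZ1.comp (by fun_prop)
          · exact hZ1.comp (by fun_prop)
      _ = (2 * ENNReal.ofReal δ * μ D) * μ Y +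
            ∫⁻ y in Y, ∫⁻ x, Z.indicator (fun _ => 2) (x, y) ∂μ ∂μ +
            ∫⁻ y in Y, ∫⁻ x, Z.indicator (fun _ => 2) (x, y + s) ∂μ ∂μ := by
          rw [lintegral_add_right, lintegral_add_right, lintegral_indicator_const hD,
            setLIntegral_const]
          · exact hZ1.lintegral_prod_left'
          · exact (hZ1.lintegral_prod_left' (μ := μ)).comp (measurable_add_const s)
      _ ≤ (2 * ENNReal.ofReal δ * μ D) * μ Y + 2 * ENNReal.ofReal δ + 2 * ENNReal.ofReal δ := by
          gcongr
          · exact (setLIntegral_le_lintegral _ _).trans hZint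
          · refine (setLIntegral_le_lintegral _ _).trans ?_
            rwa [lintegral_add_right_eq_self
              (fun y => ∫⁻ x, Z.indicator (fun _ => (2 : ℝ≥0∞)) (x, y) ∂μ) s]
      _ = _ := by ring
  obtain ⟨y, hy, hle⟩ := exists_le_setLAverage hY0 hYtop
    (f := fun y => ∫⁻ s in S, ∫⁻ x,
      incrementError D f (fun s => f (y + s) * conj (f y)) (x, s) ∂μ ∂μ)
    (hmeas2.lintegral_prod_right').aemeasurable
  refine ⟨fun s => f (y + s) * conj (f y), by fun_prop, by simp [hf1], hle.trans ?_⟩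
  rw [setLAverage_eq, ENNReal.div_eq_inv_mul, mul_assoc, ENNReal.div_eq_inv_mul, mul_assoc]
  gcongr
  rw [lintegral_lintegral_swap hmeas2.aemeasurable]
  refine (setLIntegral_mono' hS hs).trans ?_
  rw [setLIntegral_const]
  exact le_of_eq (by ring)

end

section
variable {E : Type*} [NormedAddCommGroup E] [InnerProductSpace ℝ E] [FiniteDimensional ℝ E]
  [MeasurableSpace E] [BorelSpace E]

open FourierTransform SchwartzMap in
theorem SchwartzMap.integral_inner_comp_add_right (φ : 𝓢(E, ℂ)) (s : E) :
    ∫ x, inner ℂ (φ x) (φ (x + s)) =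
      ∫ ξ, ((‖𝓕 φ ξ‖ ^ 2 : ℝ) : ℂ) * Complex.exp (Complex.I * (⟪s, (2 * Real.pi) • ξ⟫ : ℝ)) := by
  have h := integral_inner_fourier_fourier φ (φ.compSubConstCLM ℂ (-s))
  simp only [compSubConstCLM_apply, sub_neg_eq_add] at h
  rw [← h]
  congr 1 with ξ
  have h2 : 𝓕 (φ.compSubConstCLM ℂ (-s)) ξ
      = Complex.exp (Complex.I * (⟪s, (2 * Real.pi) • ξ⟫ : ℝ)) * 𝓕 φ ξ := by
    have h3 := congrFun (VectorFourier.fourierIntegral_comp_add_right Real.fourierChar volume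
      (innerₗ E) φ s) ξ
    have h4 : (fun x => φ.compSubConstCLM ℂ (-s) x) = (⇑φ ∘ fun v => v + s) := by
      ext x; simp
    rw [← h4] at h3
    have h5 : (2 * Real.pi : ℂ) * ((⟪s, ξ⟫ : ℝ) : ℂ) * Complex.I
        = Complex.I * (⟪s, (2 * Real.pi) • ξ⟫ : ℝ) := by
      rw [inner_smul_right]; push_cast; ring
    rw [fourier_coe, fourier_coe]
    refine h3.trans ?_
    rw [Circle.smul_def, Real.fourierChar_apply, innerₗ_apply_apply, smul_eq_mul]
    congr 2
    rw [← h5]; push_cast; rfl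
  rw [h2]
  simp only [RCLike.inner_apply]
  rw [mul_assoc, RCLike.mul_conj, mul_comm]
  norm_cast

open FourierTransform SchwartzMap in
theorem SchwartzMap.re_integral_mul_integral_inner_le {K : E → ℂ} (hK : Integrable K) {c : ℝ}
    (hc : ∀ ξ : E, (∫ s, K s * Complex.exp (Complex.I * (⟪s, ξ⟫ : ℝ))).re ≤ c) (φ : 𝓢(E, ℂ)) :
    (∫ s, K s * ∫ x, inner ℂ (φ x) (φ (x + s))).re ≤ c * ∫ x, ‖φ x‖ ^ 2 := by
  have hint : Integrable (fun ξ => ((‖𝓕 φ ξ‖ ^ 2 : ℝ) : ℂ)) :=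
    ((memLp_two_iff_integrable_sq_norm (𝓕 φ).continuous.aestronglyMeasurable).1
      ((𝓕 φ).memLp 2 volume)).ofReal
  have hprod : Integrable (fun p : E × E => K p.1 * (((‖𝓕 φ p.2‖ ^ 2 : ℝ) : ℂ) *
      Complex.exp (Complex.I * (⟪p.1, (2 * Real.pi) • p.2⟫ : ℝ)))) (volume.prod volume) := by
    have := hK.mul_prod hint
    refine (this.bdd_mul (c := 1)
      (f := fun p : E × E => Complex.exp (Complex.I * (⟪p.1, (2 * Real.pi) • p.2⟫ : ℝ)))
        ?_ ?_).congr ?_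
    · exact Continuous.aestronglyMeasurable (by fun_prop)
    · refine .of_forall fun p => ?_
      rw [mul_comm, Complex.norm_exp_ofReal_mul_I]
    · refine .of_forall fun p => ?_
      simp only
      ring
  have h1 : ∫ s, K s * ∫ x, inner ℂ (φ x) (φ (x + s)) =
      ∫ ξ, ((‖𝓕 φ ξ‖ ^ 2 : ℝ) : ℂ) *
        ∫ s, K s * Complex.exp (Complex.I * (⟪s, (2 * Real.pi) • ξ⟫ : ℝ)) := by
    simp_rw [integral_inner_comp_add_right, ← integral_const_mul]
    rw [integral_integral_swap hprod]
    congr! 4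
    ring
  have hint2 : Integrable (fun ξ => ((‖𝓕 φ ξ‖ ^ 2 : ℝ) : ℂ) *
        ∫ s, K s * Complex.exp (Complex.I * (⟪s, (2 * Real.pi) • ξ⟫ : ℝ))) := by
    refine hprod.integral_prod_right.congr (.of_forall fun ξ => ?_)
    simp only [← integral_const_mul]
    congr! 2
    ring
  rw [h1, ← integral_norm_sq_fourier, ← integral_const_mul]
  have h2 := integral_re hint2
  simp only [RCLike.re_to_complex] at h2
  rw [← h2]
  refine integral_mono hint2.re ?_ fun ξ => ?_
  · have := hint.re
    simp only [RCLike.re_to_complex, Complex.ofReal_re] at this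
    exact this.const_mul c
  · simp only [Complex.re_ofReal_mul]
    rw [mul_comm]
    gcongr
    exact hc _

open SchwartzMap in
theorem re_integral_mul_integral_inner_le {K : E → ℂ} (hK : Integrable K) {c : ℝ}
    (hc : ∀ ξ : E, (∫ s, K s * Complex.exp (Complex.I * (⟪s, ξ⟫ : ℝ))).re ≤ c) {F : E → ℂ}
    (hF : MemLp F 2) :
    (∫ s, K s * ∫ x, inner ℂ (F x) (F (x + s))).re ≤ c * ∫ x, ‖F x‖ ^ 2 := by
  let τ : E → Lp ℂ 2 (volume : Measure E) → Lp ℂ 2 (volume : Measure E) := fun s =>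
    Lp.compMeasurePreserving (· + s) (measurePreserving_add_right volume s)
  have hinner : ∀ (G : E → ℂ) (hG : MemLp G 2) (s : E),
      inner ℂ hG.toLp (τ s hG.toLp) = ∫ x, inner ℂ (G x) (G (x + s)) := by
    intro G hG s
    rw [L2.inner_def]
    refine integral_congr_ae ?_
    have h1 := Lp.toLp_compMeasurePreserving hG (measurePreserving_add_right volume s)
    simp only [τ, h1]
    filter_upwards [hG.coeFn_toLp, MemLp.coeFn_toLp (hG.comp_measurePreserving
      (measurePreserving_add_right volume s))] with x hx hx2
    rw [hx, hx2]; rfl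
  have hnorm : ∀ (G : E → ℂ) (hG : MemLp G 2), ‖hG.toLp‖ ^ 2 = ∫ x, ‖G x‖ ^ 2 := by
    intro G hG
    apply Complex.ofReal_injective
    have h0 := inner_self_eq_norm_sq_to_K (𝕜 := ℂ) hG.toLp
    rw [L2.inner_def] at h0
    rw [← integral_complex_ofReal, Complex.ofReal_pow]
    refine h0.symm.trans (integral_congr_ae ?_)
    filter_upwards [hG.coeFn_toLp] with x hx
    rw [hx, inner_self_eq_norm_sq_to_K]
    norm_cast
  have key : ∀ u : Lp ℂ 2 (volume : Measure E),
      (∫ s, K s * inner ℂ u (τ s u)).re ≤ c * ‖u‖ ^ 2 := by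
    intro u
    refine DenseRange.induction_on
      (p := fun u => (∫ s, K s * inner ℂ u (τ s u)).re ≤ c * ‖u‖ ^ 2)
      (SchwartzMap.denseRange_toLpCLM (F := ℂ) (p := 2) (μ := (volume : Measure E))
        ENNReal.ofNat_ne_top) u ?_ ?_
    · refine isClosed_le (Complex.continuous_re.comp ?_) (by fun_prop)
      have hbound : ∀ (v : Lp ℂ 2 (volume : Measure E)) (s : E),
          ‖K s * inner ℂ v (τ s v)‖ ≤ ‖K s‖ * ‖v‖ ^ 2 := by
        intro v s
        rw [norm_mul, sq]
        gcongr
        exact (norm_inner_le_norm _ _).trans_eq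
          (by rw [Lp.norm_compMeasurePreserving v (measurePreserving_add_right volume s)])
      refine continuous_iff_continuousAt.2 fun v₀ => continuousAt_of_dominated
        (bound := fun s => ‖K s‖ * (‖v₀‖ + 1) ^ 2) (.of_forall fun v => ?_) ?_
        (hK.norm.mul_const _) (.of_forall fun s => ?_)
      · refine hK.aestronglyMeasurable.mul (Continuous.aestronglyMeasurable ?_)
        refine continuous_const.inner ?_
        have hg : Continuous (ContinuousMap.curry
            (⟨fun p : E × E => p.2 + p.1, by fun_prop⟩ : C(E × E, E))) :=
          ContinuousMap.continuous _
        exact (continuous_const (y := v)).compMeasurePreservingLp hg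
          (fun s => measurePreserving_add_right volume s) ENNReal.ofNat_ne_top
      · filter_upwards [Metric.ball_mem_nhds v₀ one_pos] with v hv
        refine .of_forall fun s => (hbound v s).trans ?_
        have : ‖v‖ ≤ ‖v₀‖ + 1 := by
          have := norm_le_norm_add_norm_sub' v v₀
          rw [mem_ball, dist_eq_norm] at hv
          linarith
        gcongr
      · refine Continuous.continuousAt (continuous_const.mul (continuous_id.inner ?_))
        exact (Lp.isometry_compMeasurePreserving (measurePreserving_add_right volume s)).continuous
    · intro φ
      have := SchwartzMap.re_integral_mul_integral_inner_le hK hc φ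
      have h2 := hinner φ (φ.memLp 2 volume)
      have h3 := hnorm φ (φ.memLp 2 volume)
      simp_rw [← h2, ← h3] at this
      exact this
  have := key hF.toLp
  simpa only [hinner, hnorm] using this

/-- If the multiplicative increments of `f` on `D` are close to `g` on `S`, then `g ^ N` is close
on `S` to a character, up to the proportion of `D` that translation by `S` pushes out of `D`. -/
theorem exists_lintegral_pow_sub_exp_le {f g : E → ℂ} (hf : Measurable f) (hf1 : ∀ x, ‖f x‖ = 1)
    (hg : Measurable g) (hg1 : ∀ x, ‖g x‖ = 1) {D D' S : Set E} (hD : MeasurableSet D)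
    (hD' : MeasurableSet D') (hS : MeasurableSet S) (hD'D : D' ⊆ D)
    (hD'S : ∀ x ∈ D', ∀ s ∈ S, x + s ∈ D) (hD0 : volume D ≠ 0) (hDtop : volume D ≠ ∞)
    (hStop : volume S ≠ ∞) {N : ℕ} (hN : 0 < N) {η : ℝ}
    (hη : ∫⁻ s in S, ∫⁻ x, incrementError D f g (x, s) < ENNReal.ofReal η) :
    ∃ ξ : E, ∫⁻ s in S, ‖g s ^ N - Complex.exp (Complex.I * (⟪s, ξ⟫ : ℝ))‖ₑ ^ 2 ≤
      ENNReal.ofReal (2 * (volume.real S * (volume.real D - volume.real D') + N * η)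
        / volume.real D) := by
  have hDpos : 0 < volume.real D := ENNReal.toReal_pos hD0 hDtop
  have hD'top : volume D' ≠ ∞ := measure_ne_top_of_subset hD'D hDtop
  have : IsFiniteMeasure (volume.restrict S) := isFiniteMeasure_restrict.2 hStop
  have hconj : Measurable (conj : ℂ → ℂ) := Complex.continuous_conj.measurable
  set K : E → ℂ := S.indicator fun s => conj (g s) ^ N with hKdef
  set F : E → ℂ := D.indicator fun x => f x ^ N with hFdef
  have hKint : Integrable K := by
    rw [hKdef, integrable_indicator_iff hS]
    refine (integrable_const (1 : ℝ)).mono' (by fun_prop) (.of_forall fun s => ?_)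
    simp [hg1]
  have hF : MemLp F 2 := by
    rw [hFdef, memLp_indicator_iff_restrict hD]
    have : IsFiniteMeasure (volume.restrict D) := isFiniteMeasure_restrict.2 hDtop
    exact MemLp.of_bound (by fun_prop) 1 (.of_forall fun x => by simp [hf1])
  have hFnorm : ∫ x, ‖F x‖ ^ 2 = volume.real D := by
    have : (fun x => ‖F x‖ ^ 2) = D.indicator 1 := by
      ext x
      by_cases hx : x ∈ D <;> simp [hFdef, hx, hf1]
    rw [this, integral_indicator_one hD]
  have hlower : volume.real S * volume.real D' - N * η <
      (∫ s, K s * ∫ x, inner ℂ (F x) (F (x + s))).re := by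
    set ν := (volume.restrict S).prod (volume : Measure E)
    set P : E × E → ℂ := fun p => conj (g p.1) ^ N * inner ℂ (F p.2) (F (p.2 + p.1)) with hPdef
    have hFmeas : Measurable F := (hf.pow_const N).indicator hD
    have hPnorm : ∀ p, ‖P p‖ ≤ D.indicator 1 p.2 := by
      intro p
      by_cases hx : p.2 ∈ D
      · by_cases hx2 : p.2 + p.1 ∈ D <;> simp [hPdef, hFdef, hg1, hf1, hx, hx2]
      · simp [hPdef, hFdef, hx]
    have h1int : ∀ {A : Set E}, MeasurableSet A → volume A ≠ ∞ →
        Integrable (fun p : E × E => A.indicator (1 : E → ℝ) p.2) ν := fun hA hAtop =>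
      Integrable.comp_snd (f := _) ((integrable_indicator_iff hA).2
        (integrableOn_const hAtop)) _
    have hPint : Integrable P ν := by
      refine (h1int hD hDtop).mono' (Measurable.aestronglyMeasurable ?_) (.of_forall hPnorm)
      simp only [hPdef, RCLike.inner_apply]
      fun_prop
    have hPeq : ∫ s, K s * ∫ x, inner ℂ (F x) (F (x + s)) = ∫ p, P p ∂ν := by
      rw [integral_prod P hPint, ← integral_indicator hS]
      congr 1 with s
      by_cases hs : s ∈ S <;> simp [hKdef, hPdef, hs, integral_const_mul]
    have hkmeas : Measurable fun p : E × E => incrementError D f g (p.2, p.1) :=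
      (measurable_incrementError hD hf hg).comp measurable_swap
    have hk : ∫⁻ p, incrementError D f g (p.2, p.1) ∂ν < ENNReal.ofReal η := by
      rwa [lintegral_prod _ hkmeas.aemeasurable]
    have hkint := integrable_toReal_of_lintegral_ne_top hkmeas.aemeasurable hk.ne_top
    have hkle : ∫ p, (incrementError D f g (p.2, p.1)).toReal ∂ν < η := by
      rw [integral_toReal hkmeas.aemeasurable
        (.of_forall fun p => by
          refine lt_of_le_of_lt (Set.indicator_le_self _ _ _) enorm_lt_top)]
      exact (ENNReal.lt_ofReal_iff_toReal_lt hk.ne_top).1 hk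
    have hre := integral_re hPint
    simp only [RCLike.re_to_complex] at hre
    rw [hPeq, ← hre]
    calc volume.real S * volume.real D' - N * η
        < volume.real S * volume.real D' -
            N * ∫ p, (incrementError D f g (p.2, p.1)).toReal ∂ν := by gcongr
      _ = ∫ p, (D'.indicator (1 : E → ℝ) p.2 -
            N * (incrementError D f g (p.2, p.1)).toReal) ∂ν := by
          rw [integral_sub (h1int hD' hD'top) (hkint.const_mul _), integral_const_mul,
            integral_fun_snd, integral_indicator_one hD']
          simp
      _ ≤ ∫ p, (P p).re ∂ν := by
          refine integral_mono_ae ((h1int hD' hD'top).sub (hkint.const_mul _)) hPint.re ?_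
          have hmem : ∀ᵐ p ∂ν, p.1 ∈ S :=
            Measure.quasiMeasurePreserving_fst.ae (ae_restrict_mem hS)
          filter_upwards [hmem] with ⟨s, x⟩ hs
          simp only at hs ⊢
          by_cases hW : x ∈ D ∧ x + s ∈ D
          · have hb : ‖f (x + s) ^ N * conj (f x) ^ N - g s ^ N‖ ≤
                N * (incrementError D f g (x, s)).toReal := by
              rw [incrementError, Set.indicator_of_mem (by exact hW), ← mul_pow, toReal_enorm]
              exact norm_pow_sub_pow_le (by simp [hf1]) (hg1 s) N
            have hgg : conj (g s) ^ N * g s ^ N = 1 := by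
              rw [← mul_pow]; simp [Complex.conj_mul', hg1]
            have hP : P (s, x) = 1 + conj (g s) ^ N *
                (f (x + s) ^ N * conj (f x) ^ N - g s ^ N) := by
              simp only [hPdef, hFdef, Set.indicator_of_mem hW.1, Set.indicator_of_mem hW.2,
                RCLike.inner_apply, map_pow]
              linear_combination hgg
            have hre2 := Complex.abs_re_le_norm (conj (g s) ^ N *
                (f (x + s) ^ N * conj (f x) ^ N - g s ^ N))
            rw [norm_mul, norm_pow, RCLike.norm_conj, hg1, one_pow, one_mul] at hre2
            have h1 : D'.indicator (1 : E → ℝ) x ≤ 1 :=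
              Set.indicator_le_self' (fun _ _ => zero_le_one) x
            rw [hP, Complex.add_re, Complex.one_re]
            linarith [neg_abs_le (conj (g s) ^ N *
                (f (x + s) ^ N * conj (f x) ^ N - g s ^ N)).re]
          · have hx : x ∉ D' := fun hx => hW ⟨hD'D hx, hD'S x hx s hs⟩
            have hP : P (s, x) = 0 := by
              by_cases hxD : x ∈ D
              · have : x + s ∉ D := fun h => hW ⟨hxD, h⟩
                simp [hPdef, hFdef, this]
              · simp [hPdef, hFdef, hxD]
            have : 0 ≤ N * (incrementError D f g (x, s)).toReal := by positivity
            simpa [hP, hx] using this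
  obtain ⟨ξ, hξ⟩ : ∃ ξ : E, (volume.real S * volume.real D' - N * η) / volume.real D <
      (∫ s, K s * Complex.exp (Complex.I * (⟪s, ξ⟫ : ℝ))).re := by
    by_contra! hc
    have := re_integral_mul_integral_inner_le hKint hc hF
    rw [hFnorm, div_mul_cancel₀ _ hDpos.ne'] at this
    exact hlower.not_ge this
  refine ⟨ξ, ?_⟩
  have he1 : ∀ s, ‖Complex.exp (Complex.I * (⟪s, ξ⟫ : ℝ))‖ = 1 := fun s => by
    rw [mul_comm, Complex.norm_exp_ofReal_mul_I]
  have hint : Integrable (fun s => conj (g s) ^ N * Complex.exp (Complex.I * (⟪s, ξ⟫ : ℝ)))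
      (volume.restrict S) := by
    refine (integrable_const (1 : ℝ)).mono' ?_ (.of_forall fun s => ?_)
    · exact ((hconj.comp hg).pow_const N).aestronglyMeasurable.mul
        (Continuous.aestronglyMeasurable (by fun_prop))
    · rw [norm_mul, he1]
      simp [hg1]
  have hintre : Integrable (fun s => (conj (g s) ^ N *
      Complex.exp (Complex.I * (⟪s, ξ⟫ : ℝ))).re) (volume.restrict S) := hint.re
  have hre : ∫ s in S, (conj (g s) ^ N * Complex.exp (Complex.I * (⟪s, ξ⟫ : ℝ))).re =
      (∫ s, K s * Complex.exp (Complex.I * (⟪s, ξ⟫ : ℝ))).re := by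
    have := integral_re hint
    simp only [RCLike.re_to_complex] at this
    rw [this, ← integral_indicator hS]
    congr 2 with s
    by_cases hs : s ∈ S <;> simp [hKdef, hs]
  have hsq : ∀ s, ‖g s ^ N - Complex.exp (Complex.I * (⟪s, ξ⟫ : ℝ))‖ ^ 2 =
      2 - 2 * (conj (g s) ^ N * Complex.exp (Complex.I * (⟪s, ξ⟫ : ℝ))).re := by
    intro s
    have := @norm_sub_sq ℂ ℂ _ _ _ (g s ^ N) (Complex.exp (Complex.I * (⟪s, ξ⟫ : ℝ)))
    rw [this, he1, norm_pow, hg1, RCLike.inner_apply, mul_comm _ (conj _)]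
    simp only [map_pow, RCLike.re_to_complex]
    ring
  have hconv : ∫⁻ s in S, ‖g s ^ N - Complex.exp (Complex.I * (⟪s, ξ⟫ : ℝ))‖ₑ ^ 2 =
      ENNReal.ofReal (∫ s in S, ‖g s ^ N - Complex.exp (Complex.I * (⟪s, ξ⟫ : ℝ))‖ ^ 2) := by
    rw [ofReal_integral_eq_lintegral_ofReal]
    · simp_rw [← ofReal_norm, ENNReal.ofReal_pow (norm_nonneg _)]
    · simp_rw [hsq]
      exact (integrable_const _).sub (hintre.const_mul 2)
    · exact .of_forall fun s => by positivity
  rw [hconv]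
  refine ENNReal.ofReal_le_ofReal ?_
  simp_rw [hsq]
  rw [integral_sub (integrable_const _) (hintre.const_mul 2), integral_const_mul, hre]
  rw [div_lt_iff₀ hDpos] at hξ
  rw [le_div_iff₀ hDpos]
  simp only [integral_const, measureReal_restrict_apply_univ, smul_eq_mul]
  linarith

theorem lintegral_comp_add_smul {φ : E → ℝ≥0∞} (hφ : Measurable φ) (x : E) {R : ℝ} (hR : 0 < R) :
    ∫⁻ y, φ y = ENNReal.ofReal (R ^ Module.finrank ℝ E) * ∫⁻ s, φ (x + R • s) := by
  have h1 : ∫⁻ s, φ (x + R • s) = ∫⁻ t, φ (x + t) ∂(Measure.map (R • ·) volume) := by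
    rw [lintegral_map (by fun_prop) (by fun_prop)]
  have hpos : 0 < R ^ Module.finrank ℝ E := by positivity
  rw [h1, Measure.map_addHaar_smul _ hR.ne', lintegral_smul_measure, lintegral_add_left_eq_self,
    abs_of_pos (by positivity), smul_eq_mul, ← mul_assoc, ← ENNReal.ofReal_mul hpos.le,
    mul_inv_cancel₀ hpos.ne', ENNReal.ofReal_one, one_mul]

theorem enorm_sub_sq_le {a b c : ℂ} (ha : ‖a‖ = 1) (hb : ‖b‖ = 1) :
    ‖a - c‖ₑ ^ 2 ≤ 4 * ‖a - b‖ₑ + 2 * ‖b - c‖ₑ ^ 2 := by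
  have h1 : ‖a - c‖ ^ 2 ≤ 4 * ‖a - b‖ + 2 * ‖b - c‖ ^ 2 := by
    have h2 : ‖a - b‖ ≤ 2 := (norm_sub_le _ _).trans (by norm_num [ha, hb])
    have h3 := norm_sub_le_norm_sub_add_norm_sub a b c
    nlinarith [norm_nonneg (a - b), norm_nonneg (b - c), norm_nonneg (a - c),
      sq_nonneg (‖a - b‖ - ‖b - c‖)]
  simp_rw [← ofReal_norm, ← ENNReal.ofReal_pow (norm_nonneg _)]
  rw [← ENNReal.ofReal_ofNat 4, ← ENNReal.ofReal_ofNat 2, ← ENNReal.ofReal_mul (by norm_num),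
    ← ENNReal.ofReal_mul (by norm_num), ← ENNReal.ofReal_add (by positivity) (by positivity)]
  exact ENNReal.ofReal_le_ofReal h1

theorem enorm_mul_conj_sub_pow_le {V : Type*} [NormedAddCommGroup V] [NormedSpace ℝ V]
    {f g : V → ℂ} (hf1 : ∀ x, ‖f x‖ = 1) (hg1 : ∀ x, ‖g x‖ = 1)
    {D : Set V} (hconv : Convex ℝ D) {N : ℕ} (hN : 0 < N) {x s : V} (hx : x ∈ D)
    (hxs : x + (N : ℝ) • s ∈ D) :
    ‖f (x + (N : ℝ) • s) * conj (f x) - g s ^ N‖ₑ ≤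
      ∑ j ∈ Finset.range N, incrementError D f g (x + (j : ℝ) • s, s) := by
  have hmem : ∀ j : ℕ, j ≤ N → x + (j : ℝ) • s ∈ D := by
    intro j hj
    have hN' : (0 : ℝ) < N := by exact_mod_cast hN
    have := hconv.add_smul_mem hx hxs (t := (j : ℝ) / N)
      ⟨by positivity, by rw [div_le_one hN']; exact_mod_cast hj⟩
    rwa [smul_smul, div_mul_cancel₀ _ hN'.ne'] at this
  have hsum := norm_mul_conj_sub_pow_le (a := fun j => f (x + (j : ℝ) • s)) (fun j => hf1 _)
    (hg1 s) N
  simp only [Nat.cast_zero, zero_smul, add_zero] at hsum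
  rw [← ofReal_norm]
  refine (ENNReal.ofReal_le_ofReal hsum).trans ?_
  rw [ENNReal.ofReal_sum_of_nonneg fun _ _ => norm_nonneg _]
  refine Finset.sum_le_sum fun j hj => ?_
  have hj' : j + 1 ≤ N := Finset.mem_range.1 hj
  have hstep : x + ((j + 1 : ℕ) : ℝ) • s = x + (j : ℝ) • s + s := by
    push_cast; rw [add_smul, one_smul, add_assoc]
  have h1 := hmem (j + 1) hj'
  rw [hstep] at h1 ⊢
  rw [incrementError, Set.indicator_of_mem (by exact ⟨hmem j (by omega), h1⟩), ofReal_norm]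

/-- If the multiplicative increments of `f` along steps `s ∈ S` are close to `g`, and `g ^ N` is
close to a character on `S`, then `N` consecutive steps show that the increments of `f` between
arbitrary points of `D` are close to a character. -/
theorem lintegral_mul_conj_sub_exp_le {f g : E → ℂ} (hf : Measurable f) (hf1 : ∀ x, ‖f x‖ = 1)
    (hg : Measurable g) (hg1 : ∀ x, ‖g x‖ = 1) {D S : Set E} (hD : MeasurableSet D)
    (hS : MeasurableSet S) (hconv : Convex ℝ D) {N : ℕ} (hN : 0 < N)
    (hDS : ∀ x ∈ D, ∀ s, x + (N : ℝ) • s ∈ D → s ∈ S) (ξ : E) :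
    ∫⁻ x in D, ∫⁻ y in D,
        ‖f y * conj (f x) - Complex.exp (Complex.I * (⟪y - x, (N : ℝ)⁻¹ • ξ⟫ : ℝ))‖ₑ ^ 2 ≤
      ENNReal.ofReal ((N : ℝ) ^ Module.finrank ℝ E) *
        (4 * N * (∫⁻ s in S, ∫⁻ x, incrementError D f g (x, s)) +
          2 * volume D *
            ∫⁻ s in S, ‖g s ^ N - Complex.exp (Complex.I * (⟪s, ξ⟫ : ℝ))‖ₑ ^ 2) := by
  have hN' : (0 : ℝ) < N := by exact_mod_cast hN
  have hk := measurable_incrementError hD hf hg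
  have hmeas : Measurable fun s => ‖g s ^ N - Complex.exp (Complex.I * (⟪s, ξ⟫ : ℝ))‖ₑ ^ 2 := by
    fun_prop
  set B : E × E → ℝ≥0∞ := fun p => D.indicator (fun _ => 2 *
    ‖g p.2 ^ N - Complex.exp (Complex.I * (⟪p.2, ξ⟫ : ℝ))‖ₑ ^ 2) p.1 with hBdef
  have hB : Measurable B := by
    refine Measurable.indicator (s := {p : E × E | p.1 ∈ D}) (f := fun p : E × E => 2 *
      ‖g p.2 ^ N - Complex.exp (Complex.I * (⟪p.2, ξ⟫ : ℝ))‖ₑ ^ 2) ?_ (measurable_fst hD)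
    fun_prop
  have hmono : ∀ x ∈ D, ∫⁻ y in D,
        ‖f y * conj (f x) - Complex.exp (Complex.I * (⟪y - x, (N : ℝ)⁻¹ • ξ⟫ : ℝ))‖ₑ ^ 2 ≤
      ENNReal.ofReal ((N : ℝ) ^ Module.finrank ℝ E) *
        ∫⁻ s in S, (4 * ∑ j ∈ Finset.range N, incrementError D f g (x + (j : ℝ) • s, s)
          + B (x, s)) := by
    intro x hx
    rw [← lintegral_indicator hD, lintegral_comp_add_smul _ x hN']
    · rw [← lintegral_indicator hS]
      gcongr with s
      by_cases hxs : x + (N : ℝ) • s ∈ D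
      · rw [Set.indicator_of_mem hxs, Set.indicator_of_mem (hDS x hx s hxs)]
        have : ⟪x + (N : ℝ) • s - x, (N : ℝ)⁻¹ • ξ⟫ = ⟪s, ξ⟫ := by
          rw [add_sub_cancel_left, inner_smul_left, inner_smul_right]
          simp [hN'.ne']
        rw [this]
        refine (enorm_sub_sq_le (b := g s ^ N) (by simp [hf1]) (by simp [hg1])).trans ?_
        simp only [hBdef, Set.indicator_of_mem hx]
        gcongr
        exact enorm_mul_conj_sub_pow_le hf1 hg1 hconv hN hx hxs
      · rw [Set.indicator_of_notMem hxs]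
        exact zero_le
    · refine Measurable.indicator ?_ hD
      fun_prop
  have hj : ∀ j : ℕ, Measurable fun p : E × E =>
      incrementError D f g (p.1 + (j : ℝ) • p.2, p.2) := fun j => hk.comp (by fun_prop)
  refine (setLIntegral_mono' hD hmono).trans ?_
  refine (setLIntegral_le_lintegral _ _).trans ?_
  rw [lintegral_const_mul']
  swap
  · exact ENNReal.ofReal_ne_top
  gcongr
  rw [lintegral_lintegral_swap]
  swap
  · refine Measurable.aemeasurable (Measurable.add (Measurable.const_mul ?_ _) hB)
    exact Finset.measurable_fun_sum _ fun j _ => hj j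
  have hinner : ∀ s, ∫⁻ x, (4 * ∑ j ∈ Finset.range N, incrementError D f g (x + (j : ℝ) • s, s)
          + B (x, s)) = 4 * N * (∫⁻ x, incrementError D f g (x, s)) + 2 * volume D *
            ‖g s ^ N - Complex.exp (Complex.I * (⟪s, ξ⟫ : ℝ))‖ₑ ^ 2 := by
    intro s
    have hBs : Measurable fun x => B (x, s) := hB.comp (by fun_prop)
    rw [lintegral_add_right _ hBs,
      lintegral_const_mul' _ _ (by norm_num), lintegral_finsetSum]
    · simp_rw [lintegral_add_right_eq_self (fun x => incrementError D f g (x, s))]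
      simp only [hBdef]
      rw [lintegral_indicator_const hD]
      simp only [Finset.sum_const, Finset.card_range, nsmul_eq_mul]
      ring
    · exact fun j _ => (hj j).comp (by fun_prop : Measurable fun x => (x, s))
  simp_rw [hinner]
  rw [lintegral_add_right _ (by fun_prop), lintegral_const_mul, lintegral_const_mul _ hmeas]
  exact hk.lintegral_prod_left'

/-- A measure-theoretic choice of scale: balls of radius slightly below `r` fill `ball x₀ r`. -/
theorem exists_nat_mul_sub_ball_lt (x₀ : E) (r M : ℝ) {ε : ℝ} (hε : 0 < ε) :
    ∃ N : ℕ, 3 ≤ N ∧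
      M * (volume.real (ball x₀ r) - volume.real (ball x₀ (r - 2 * r / N))) < ε := by
  have hlim : Filter.Tendsto (fun N : ℕ => M * (volume.real (ball x₀ r) -
      (1 - 2 / (N : ℝ)) ^ Module.finrank ℝ E * volume.real (ball x₀ r))) Filter.atTop
      (nhds (M * (volume.real (ball x₀ r) -
        (1 - 0) ^ Module.finrank ℝ E * volume.real (ball x₀ r)))) :=
    ((((tendsto_const_nhds.sub (tendsto_const_div_atTop_nhds_zero_nat 2)).pow _).mul_const
      _).const_sub _).const_mul _
  simp only [sub_zero, one_pow, one_mul, sub_self, mul_zero] at hlim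
  obtain ⟨N, hN, hN3⟩ := ((hlim.eventually (gt_mem_nhds hε)).and
    (Filter.eventually_ge_atTop 3)).exists
  refine ⟨N, hN3, ?_⟩
  have hN' : (3 : ℝ) ≤ N := by exact_mod_cast hN3
  have hpos : 0 < 1 - 2 / (N : ℝ) := by
    rw [sub_pos, div_lt_one (by linarith)]
    linarith
  have h1 : r - 2 * r / N = (1 - 2 / N) * r := by ring
  have h2 : volume.real (ball x₀ (r - 2 * r / N)) =
      (1 - 2 / (N : ℝ)) ^ Module.finrank ℝ E * volume.real (ball x₀ r) := by
    rw [h1, Measure.real, Measure.real, Measure.addHaar_ball_mul_of_pos _ _ hpos,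
      ENNReal.toReal_mul, ENNReal.toReal_ofReal (by positivity),
      Measure.addHaar_ball_center volume x₀ r]
  rwa [h2]

theorem exists_forall_lintegral_sub_exp_lt (x₀ : E) {r : ℝ} (hr : 0 < r) {ε : ℝ} (hε : 0 < ε) :
    ∃ δ : ℝ, 0 < δ ∧ ∀ f h : E → ℂ, Measurable f → (∀ x, ‖f x‖ = 1) → Measurable h →
      (volume : Measure (E × E)) {p | p.1 ∈ ball x₀ r ∧ p.2 ∈ ball x₀ r ∧
        δ < ‖f p.1 * f p.2 - h (p.1 + p.2)‖} ≤ ENNReal.ofReal δ →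
      ∃ (ξ : E) (c : ℂ), ‖c‖ = 1 ∧
        ∫⁻ x in ball x₀ r, ‖f x - c * Complex.exp (Complex.I * (⟪x, ξ⟫ : ℝ))‖ₑ ^ 2
          < ENNReal.ofReal ε := by
  set D := ball x₀ r with hDdef
  have hDtop : volume D ≠ ∞ := measure_ball_lt_top.ne
  have hD0 : volume D ≠ 0 := (measure_ball_pos volume x₀ hr).ne'
  have hv : 0 < volume.real D := ENNReal.toReal_pos hD0 hDtop
  obtain ⟨N, hN3, hN⟩ := exists_nat_mul_sub_ball_lt x₀ r
    (4 * volume.real (ball (0 : E) (2 * r))) (show 0 < ε * volume.real D / 2 by positivity)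
  have hN0 : 0 < N := by omega
  have hN' : (3 : ℝ) ≤ N := by exact_mod_cast hN3
  have hNpos : (0 : ℝ) < N := by linarith
  set Y := ball x₀ (r - 2 * r / N) with hYdef
  set S := ball (0 : E) (2 * r / N) with hSdef
  set n := Module.finrank ℝ E
  have hYr : 0 < r - 2 * r / N := by
    rw [sub_pos, div_lt_iff₀ hNpos]
    nlinarith
  have hYtop : volume Y ≠ ∞ := measure_ball_lt_top.ne
  have hY0 : volume Y ≠ 0 := (measure_ball_pos volume x₀ hYr).ne'
  have hStop : volume S ≠ ∞ := measure_ball_lt_top.ne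
  have hYD : Y ⊆ D := ball_subset_ball (by
    have : 0 ≤ 2 * r / N := by positivity
    linarith)
  have hYS : ∀ y ∈ Y, ∀ s ∈ S, y + s ∈ D := by
    intro y hy s hs
    rw [hYdef, mem_ball, dist_eq_norm] at hy
    rw [hSdef, mem_ball_zero_iff] at hs
    rw [hDdef, mem_ball, dist_eq_norm, add_sub_right_comm]
    exact (norm_add_le _ _).trans_lt (by linarith)
  have hDS : ∀ x ∈ D, ∀ s, x + (N : ℝ) • s ∈ D → s ∈ S := by
    intro x hx s hs
    rw [hDdef, mem_ball] at hx hs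
    have h1 := dist_triangle_right (x + (N : ℝ) • s) x x₀
    rw [dist_eq_norm, add_sub_cancel_left, norm_smul, Real.norm_natCast] at h1
    rw [hSdef, mem_ball_zero_iff, lt_div_iff₀ hNpos]
    linarith
  have hSN : (N : ℝ) ^ n * volume.real S = volume.real (ball (0 : E) (2 * r)) := by
    have h1 : 2 * r = N * (2 * r / N) := by field_simp
    rw [h1, Measure.real, Measure.real, Measure.addHaar_ball_mul_of_pos _ _ hNpos,
      ENNReal.toReal_mul, ENNReal.toReal_ofReal (by positivity)]
  set η : ℝ := ε * volume.real D / (32 * (N * (N : ℝ) ^ n)) with hηdef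
  have hη : 0 < η := by positivity
  set C : ℝ≥0∞ := (2 * volume D * volume Y + 4) * volume S / volume Y with hCdef
  have hCtop : C ≠ ∞ := by
    refine ENNReal.div_ne_top (ENNReal.mul_ne_top (ENNReal.add_ne_top.2 ⟨?_, by norm_num⟩) hStop)
      hY0
    exact ENNReal.mul_ne_top (ENNReal.mul_ne_top (by norm_num) hDtop) hYtop
  refine ⟨η / (C.toReal + 1), by positivity, fun f h hf hf1 hh hbad => ?_⟩
  obtain ⟨g, hg, hg1, hinc⟩ := exists_lintegral_incrementError_le hf hf1 hh measurableSet_ball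
    measurableSet_ball measurableSet_ball hYD hYS hY0 hYtop hbad
  have hlt : ∫⁻ s in S, ∫⁻ x, incrementError D f g (x, s) < ENNReal.ofReal η := by
    refine hinc.trans_lt ?_
    rw [← hCdef, ← ENNReal.ofReal_toReal hCtop, ← ENNReal.ofReal_mul ENNReal.toReal_nonneg]
    refine (ENNReal.ofReal_lt_ofReal_iff hη).2 ?_
    rw [ENNReal.toReal_ofReal ENNReal.toReal_nonneg, ← mul_div_assoc,
      div_lt_iff₀ (by positivity)]
    linarith
  obtain ⟨ξ, hξ⟩ := exists_lintegral_pow_sub_exp_le hf hf1 hg hg1 measurableSet_ball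
    measurableSet_ball measurableSet_ball hYD hYS hD0 hDtop hStop hN0 hlt
  have hdouble := lintegral_mul_conj_sub_exp_le hf hf1 hg hg1 measurableSet_ball
    measurableSet_ball (convex_ball x₀ r) hN0 hDS ξ
  have hYDle : volume.real Y ≤ volume.real D := measureReal_mono hYD hDtop
  have htotal : ∫⁻ x in D, ∫⁻ y in D,
      ‖f y * conj (f x) - Complex.exp (Complex.I * (⟪y - x, (N : ℝ)⁻¹ • ξ⟫ : ℝ))‖ₑ ^ 2 <
      ENNReal.ofReal (ε * volume.real D) := by
    have hκ : 0 ≤ 2 * (volume.real S * (volume.real D - volume.real Y) + N * η)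
        / volume.real D := by
      have : 0 ≤ volume.real S * (volume.real D - volume.real Y) :=
        mul_nonneg measureReal_nonneg (sub_nonneg.2 hYDle)
      positivity
    calc _ ≤ ENNReal.ofReal ((N : ℝ) ^ n) * (4 * N * ENNReal.ofReal η + 2 * volume D *
            ENNReal.ofReal (2 * (volume.real S * (volume.real D - volume.real Y) + N * η)
              / volume.real D)) := by
          refine hdouble.trans ?_
          gcongr
      _ = ENNReal.ofReal ((N : ℝ) ^ n * (4 * N * η + 2 * volume.real D *
            (2 * (volume.real S * (volume.real D - volume.real Y) + N * η)
              / volume.real D))) := by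
          rw [ENNReal.ofReal_mul (by positivity), ENNReal.ofReal_add (by positivity)
            (mul_nonneg (by positivity) hκ), ENNReal.ofReal_mul (by positivity),
            ENNReal.ofReal_mul (by positivity), ENNReal.ofReal_mul (by positivity),
            ENNReal.ofReal_mul (by positivity)]
          simp [ENNReal.ofReal_natCast, ofReal_measureReal hDtop]
      _ < _ := by
          refine (ENNReal.ofReal_lt_ofReal_iff (by positivity)).2 ?_
          have h1 : (N : ℝ) ^ n * (4 * N * η + 2 * volume.real D *
            (2 * (volume.real S * (volume.real D - volume.real Y) + N * η)
              / volume.real D)) = 8 * (N * (N : ℝ) ^ n * η) +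
              4 * ((N : ℝ) ^ n * volume.real S) * (volume.real D - volume.real Y) := by
            field_simp
            ring
          have h2 : N * (N : ℝ) ^ n * η = ε * volume.real D / 32 := by
            rw [hηdef]
            field_simp
          rw [h1, h2, hSN]
          have : 0 < ε * volume.real D := by positivity
          linarith
  obtain ⟨x, -, hx⟩ := exists_le_setLAverage hD0 hDtop (f := fun x => ∫⁻ y in D,
      ‖f y * conj (f x) - Complex.exp (Complex.I * (⟪y - x, (N : ℝ)⁻¹ • ξ⟫ : ℝ))‖ₑ ^ 2) (by
    refine Measurable.aemeasurable (Measurable.lintegral_prod_right' (f := fun p : E × E =>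
      ‖f p.2 * conj (f p.1) - Complex.exp (Complex.I * (⟪p.2 - p.1, (N : ℝ)⁻¹ • ξ⟫ : ℝ))‖ₑ ^ 2) ?_)
    have : Measurable (conj : ℂ → ℂ) := Complex.continuous_conj.measurable
    fun_prop)
  refine ⟨(N : ℝ)⁻¹ • ξ, f x * Complex.exp (-(Complex.I * (⟪x, (N : ℝ)⁻¹ • ξ⟫ : ℝ))), ?_, ?_⟩
  · rw [norm_mul, hf1, one_mul, ← mul_neg, ← Complex.ofReal_neg, mul_comm,
      Complex.norm_exp_ofReal_mul_I]
  · refine lt_of_le_of_lt (le_of_eq ?_) (hx.trans_lt ?_)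
    · congr 1 with y
      have h1 : f x * conj (f x) = 1 := by simp [Complex.mul_conj', hf1]
      have h2 : f y - f x * Complex.exp (-(Complex.I * (⟪x, (N : ℝ)⁻¹ • ξ⟫ : ℝ))) *
          Complex.exp (Complex.I * (⟪y, (N : ℝ)⁻¹ • ξ⟫ : ℝ)) = f x * (f y * conj (f x) -
            Complex.exp (Complex.I * (⟪y - x, (N : ℝ)⁻¹ • ξ⟫ : ℝ))) := by
        have h3 : Complex.exp (Complex.I * (⟪y - x, (N : ℝ)⁻¹ • ξ⟫ : ℝ)) =
            Complex.exp (-(Complex.I * (⟪x, (N : ℝ)⁻¹ • ξ⟫ : ℝ))) *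
              Complex.exp (Complex.I * (⟪y, (N : ℝ)⁻¹ • ξ⟫ : ℝ)) := by
          rw [← Complex.exp_add, inner_sub_left]
          push_cast
          ring_nf
        rw [h3]
        linear_combination -f y * h1
      have h4 : ‖f x‖ₑ = 1 := by rw [← ofReal_norm, hf1, ENNReal.ofReal_one]
      rw [h2, enorm_mul, h4, one_mul]
    · rw [setLAverage_eq, ENNReal.div_lt_iff (Or.inl hD0) (Or.inl hDtop)]
      rwa [ENNReal.ofReal_mul hε.le, ofReal_measureReal hDtop] at htotal

end

/-- **Characterization of approximate characters.** Let `D ⊂ ℝ^d` be a bounded open ball.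
For any `ε > 0` there exists `δ > 0` with the following property: if `ψ : D → ℝ` and
`h : D+D → ℂ` are measurable functions such that the Lebesgue measure of
`{(x,y) ∈ D×D : |e^{i[ψ(x)+ψ(y)]} - h(x+y)| > δ}` is less than `δ`, then there exist
`ξ ∈ ℝ^d` and `c ∈ ℂ` with `|c| = 1` such that `‖e^{iψ(x)} - c e^{i x·ξ}‖_{L²(D)} < ε`. -/
theorem approximate_character (d : ℕ) (x₀ : EuclideanSpace ℝ (Fin d)) (r : ℝ) (hr : 0 < r)
    (ε : ℝ) (hε : 0 < ε) :
    ∃ δ : ℝ, 0 < δ ∧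
      ∀ (ψ : EuclideanSpace ℝ (Fin d) → ℝ) (h : EuclideanSpace ℝ (Fin d) → ℂ),
        Measurable ψ → Measurable h →
        (volume : Measure (EuclideanSpace ℝ (Fin d) × EuclideanSpace ℝ (Fin d)))
          {p | p.1 ∈ ball x₀ r ∧ p.2 ∈ ball x₀ r ∧
            δ < ‖Complex.exp (Complex.I * ((ψ p.1 + ψ p.2 : ℝ) : ℂ)) - h (p.1 + p.2)‖}
          < ENNReal.ofReal δ →
        ∃ (ξ : EuclideanSpace ℝ (Fin d)) (c : ℂ), ‖c‖ = 1 ∧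
          eLpNorm
            (fun x => Complex.exp (Complex.I * ((ψ x : ℝ) : ℂ))
              - c * Complex.exp (Complex.I * ((⟪x, ξ⟫ : ℝ) : ℂ)))
            2 (volume.restrict (ball x₀ r)) < ENNReal.ofReal ε := by
  obtain ⟨δ, hδ, H⟩ := exists_forall_lintegral_sub_exp_lt x₀ hr (show 0 < ε ^ 2 by positivity)
  refine ⟨δ, hδ, fun ψ h hψ hh hbad => ?_⟩
  have hadd : ∀ p : EuclideanSpace ℝ (Fin d) × EuclideanSpace ℝ (Fin d),
      Complex.exp (Complex.I * ((ψ p.1 + ψ p.2 : ℝ) : ℂ)) =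
        Complex.exp (Complex.I * (ψ p.1 : ℂ)) * Complex.exp (Complex.I * (ψ p.2 : ℂ)) := fun p => by
    rw [← Complex.exp_add, ← mul_add, Complex.ofReal_add]
  simp_rw [hadd] at hbad
  obtain ⟨ξ, c, hc, hlt⟩ := H (fun x => Complex.exp (Complex.I * (ψ x : ℂ))) h (by fun_prop)
    (fun x => by rw [mul_comm, Complex.norm_exp_ofReal_mul_I]) hh hbad.le
  refine ⟨ξ, c, hc, ?_⟩
  rw [eLpNorm_eq_lintegral_rpow_enorm_toReal two_ne_zero ENNReal.ofNat_ne_top]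
  simp only [ENNReal.toReal_ofNat, ENNReal.rpow_ofNat]
  rw [ENNReal.ofReal_pow hε.le, ← ENNReal.rpow_ofNat] at hlt
  rwa [one_div, ENNReal.rpow_inv_lt_iff two_pos]

end
end
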